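/- arXiv:1710.02995 — 2 statements merged into one kernel-verified Lean document; each statement's English description precedes it below -/
import Mathlib

section
/- With S(√x; 0) = √2·x^{1/4}·Σ_{m ∈ ℕ, m ≤ √x} r₂(m)·(√x − m)^{1/2} and c₀ = 2^{3/2}π/3, one has limsup_{x→∞} x^{−1/2}·(S(√x; 0) − c₀·x) = +∞. -/
open Real

/-- `r₂(m)`: the number of representations of `m` as a sum of two squares of integers. -/
noncomputable def r2 (m : ℕ) : ℕ :=
  Set.ncard {p : ℤ × ℤ | p.1 ^ 2 + p.2 ^ 2 = (m : ℤ)}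

/-- `S(√x; 0) = √2·x^{1/4}·Σ_{m ∈ ℕ, m ≤ √x} r₂(m)·(√x − m)^{1/2}`. -/
noncomputable def Sx0 (x : ℝ) : ℝ :=
  Real.sqrt 2 * x ^ ((1 : ℝ) / 4) *
    ∑ m ∈ Finset.range (⌊Real.sqrt x⌋₊ + 1),
      (r2 m : ℝ) * (Real.sqrt x - m) ^ ((1 : ℝ) / 2)

/-!
Up to the factor `√2 / t`, the quantity to be bounded at `x = t ^ 4` is the error `E(t)` in
approximating `∑ √(t² - |v|²)`, over the points `v` of `ℤ²` in the disc of radius `t`, by the volume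
of a half-ball. Subordination and the theta transformation show that the Laplace transform of `E` is
`∑ 4π / (s² + 4π²|v|²)²`, over `v ≠ 0`: it has double poles at `±2πi√n` for each sum of two squares
`n > 0`, where it is asymptotic to a negative multiple of `(s ∓ 2πi√n)⁻²`.

Suppose `E(t) ≤ A * t + D`, and average `A * t + D - E(t)` against the Riesz product
`∏ (1 - cos (2π√p * t))` over finitely many primes `p ≡ 1 (mod 4)`. The square roots of these
primes are linearly independent over `ℚ`, and the square of a combination of them with coefficients
in `{-1, 0, 1}` is rational only if at most one of them occurs, so only the frequencies `0` and
`±2π√p` of the product meet poles. Positivity of the average gives `∑ 1 / p ≤ 8π * A`, whereas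
`∑ 1 / p` diverges over the primes `p ≡ 1 (mod 4)`.
-/

section Subordination

open MeasureTheory Set

lemma lintegral_cosh_mul_comp_sinh (f : ℝ → ENNReal) :
    ∫⁻ w, ENNReal.ofReal (cosh w) * f (sinh w) = ∫⁻ x, f x := by
  have h := lintegral_image_eq_lintegral_abs_deriv_mul MeasurableSet.univ
    (fun w _ => (Real.hasDerivAt_sinh w).hasDerivWithinAt) Real.sinh_injective.injOn f
  simpa [image_univ, Real.sinh_surjective.range_eq, abs_of_pos (cosh_pos _)] using h.symm

lemma lintegral_exp_mul_eq_cosh_mul_of_even {g : ℝ → ENNReal} (hg : Measurable g)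
    (heven : ∀ w, g (-w) = g w) :
    ∫⁻ w, ENNReal.ofReal (rexp w) * g w = ∫⁻ w, ENNReal.ofReal (cosh w) * g w := by
  have hneg : ∫⁻ w, ENNReal.ofReal (rexp (-w)) * g w = ∫⁻ w, ENNReal.ofReal (rexp w) * g w := by
    simpa [heven] using lintegral_neg_eq_self (fun w => ENNReal.ofReal (rexp w) * g w)
  have hcosh (w : ℝ) : ENNReal.ofReal (rexp w) * g w + ENNReal.ofReal (rexp (-w)) * g w =
      2 * (ENNReal.ofReal (cosh w) * g w) := by
    rw [← add_mul, ← ENNReal.ofReal_add (exp_pos _).le (exp_pos _).le, ← mul_assoc,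
      ← ENNReal.ofReal_ofNat 2, ← ENNReal.ofReal_mul zero_le_two, cosh_eq]
    congr 2
    ring
  refine (ENNReal.mul_right_inj two_ne_zero ENNReal.ofNat_ne_top).1 ?_
  rw [two_mul]
  nth_rewrite 2 [← hneg]
  rw [← lintegral_add_left (by fun_prop), lintegral_congr hcosh,
    lintegral_const_mul _ (by fun_prop)]

lemma lintegral_Ioi_eq_lintegral_comp_mul_exp_two_mul {c : ℝ} (hc : 0 < c) (f : ℝ → ENNReal) :
    ∫⁻ u in Ioi 0, f u =
      ∫⁻ w, ENNReal.ofReal (2 * c * rexp (2 * w)) * f (c * rexp (2 * w)) := by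
  have hderiv (w : ℝ) : HasDerivAt (fun w => c * rexp (2 * w)) (2 * c * rexp (2 * w)) w :=
    ((hasDerivAt_const_mul 2).exp.const_mul c).congr_deriv (by ring)
  have hinj : Function.Injective fun w => c * rexp (2 * w) := fun a b hab => by
    simpa [hc.ne'] using hab
  have hrange : range (fun w => c * rexp (2 * w)) = Ioi 0 := by
    ext u
    refine ⟨by rintro ⟨w, rfl⟩; exact mul_pos hc (exp_pos _), fun hu => ⟨log (u / c) / 2, ?_⟩⟩
    change c * rexp (2 * (log (u / c) / 2)) = u
    rw [mul_div_cancel₀ _ two_ne_zero, exp_log (div_pos hu hc), mul_div_cancel₀ _ hc.ne']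
  have h := lintegral_image_eq_lintegral_abs_deriv_mul MeasurableSet.univ
    (fun w _ => (hderiv w).hasDerivWithinAt) hinj.injOn f
  rw [image_univ, hrange, setLIntegral_univ] at h
  simpa only [abs_of_pos (mul_pos (mul_pos two_pos hc) (exp_pos _))] using h

lemma lintegral_exp_neg_mul_sq {b : ℝ} (hb : 0 < b) :
    ∫⁻ x : ℝ, ENNReal.ofReal (rexp (-b * x ^ 2)) = ENNReal.ofReal √(π / b) := by
  rw [← ofReal_integral_eq_lintegral_ofReal (integrable_exp_neg_mul_sq hb)
    (ae_of_all _ fun _ => (exp_pos _).le), integral_gaussian]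

/-- The subordination formula for the exponential. The substitution `u = ρ / (2 * s) * exp (2 * w)`
makes the exponent `-s * ρ * cosh (2 * w) = -s * ρ - 2 * s * ρ * sinh w ^ 2`, and the remaining
factor `exp w` may be symmetrised to `cosh w`. -/
lemma lintegral_inv_sqrt_mul_exp_neg_sub_div {s ρ : ℝ} (hs : 0 < s) (hρ : 0 < ρ) :
    ∫⁻ u in Ioi 0, ENNReal.ofReal ((√(π * u))⁻¹ * rexp (-(u * s ^ 2) - ρ ^ 2 / (4 * u))) =
      ENNReal.ofReal (rexp (-(s * ρ)) / s) := by
  have hc : 0 < ρ / (2 * s) := by positivity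
  have hint (w : ℝ) : ENNReal.ofReal (2 * (ρ / (2 * s)) * rexp (2 * w)) *
      ENNReal.ofReal ((√(π * (ρ / (2 * s) * rexp (2 * w))))⁻¹ *
        rexp (-(ρ / (2 * s) * rexp (2 * w) * s ^ 2) - ρ ^ 2 / (4 * (ρ / (2 * s) * rexp (2 * w))))) =
      ENNReal.ofReal (2 * √(ρ / (2 * s) / π) * rexp (-(s * ρ))) *
        (ENNReal.ofReal (rexp w) * ENNReal.ofReal (rexp (-(2 * s * ρ) * sinh w ^ 2))) := by
    have hsqrt : √(π * (ρ / (2 * s) * rexp (2 * w))) = √(π * (ρ / (2 * s))) * rexp w := by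
      rw [← mul_assoc, sqrt_mul (by positivity), two_mul w, exp_add, sqrt_mul_self (exp_pos w).le]
    have hcoeff : ρ / (2 * s) * (√(π * (ρ / (2 * s))))⁻¹ = √(ρ / (2 * s) / π) := by
      rw [← div_eq_mul_inv, div_eq_iff (by positivity), ← sqrt_mul (by positivity),
        div_mul_eq_mul_div, mul_left_comm, mul_div_cancel_left₀ _ pi_ne_zero, sqrt_mul_self hc.le]
    have hexp : -(ρ / (2 * s) * rexp (2 * w) * s ^ 2) - ρ ^ 2 / (4 * (ρ / (2 * s) * rexp (2 * w))) =
        -(s * ρ) + -(2 * s * ρ) * sinh w ^ 2 := by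
      rw [sinh_eq, two_mul w, exp_add, exp_neg]
      field_simp
      ring
    rw [← ENNReal.ofReal_mul (by positivity), ← ENNReal.ofReal_mul (exp_pos _).le,
      ← ENNReal.ofReal_mul (by positivity), hsqrt, hexp, exp_add, ← hcoeff, two_mul w, exp_add,
      mul_inv]
    congr 1
    field_simp
  have hgauss : ∫⁻ w, ENNReal.ofReal (rexp w) * ENNReal.ofReal (rexp (-(2 * s * ρ) * sinh w ^ 2)) =
      ENNReal.ofReal √(π / (2 * s * ρ)) := by
    rw [lintegral_exp_mul_eq_cosh_mul_of_even (by fun_prop) (by simp),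
      lintegral_cosh_mul_comp_sinh fun x => ENNReal.ofReal (rexp (-(2 * s * ρ) * x ^ 2)),
      lintegral_exp_neg_mul_sq (by positivity)]
  have hconst : √(ρ / (2 * s) / π) * √(π / (2 * s * ρ)) = 1 / (2 * s) := by
    rw [← sqrt_mul (by positivity), ← sqrt_sq (by positivity : 0 ≤ 1 / (2 * s))]
    congr 1
    field_simp
  rw [lintegral_Ioi_eq_lintegral_comp_mul_exp_two_mul hc, lintegral_congr hint,
    lintegral_const_mul' _ _ ENNReal.ofReal_ne_top, hgauss, ← ENNReal.ofReal_mul (by positivity),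
    mul_right_comm, mul_assoc 2, hconst]
  congr 1
  field_simp

lemma lintegral_Ioi_exp_neg_mul {s : ℝ} (hs : 0 < s) (c : ℝ) :
    ∫⁻ t in Ioi c, ENNReal.ofReal (rexp (-(s * t))) = ENNReal.ofReal (rexp (-(s * c)) / s) := by
  have hint := integrableOn_exp_mul_Ioi (neg_lt_zero.2 hs) c
  have heval := integral_exp_mul_Ioi (neg_lt_zero.2 hs) c
  simp only [neg_mul] at hint heval
  rw [← ofReal_integral_eq_lintegral_ofReal hint (ae_of_all _ fun _ => (exp_pos _).le), heval,
    neg_div_neg_eq]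

lemma lintegral_sqrt_sq_sub_mul_exp_eq (q : ℝ) {s : ℝ} (hs : 0 < s) :
    ∫⁻ t in Ioi 0, ENNReal.ofReal (√(t ^ 2 - q)) * ENNReal.ofReal (rexp (-(s * t))) =
      ∫⁻ z in Ioi 0, ENNReal.ofReal (rexp (-(s * √(z ^ 2 + q))) / s) := by
  have hlayer (t : ℝ) (ht : t ∈ Ioi 0) : ENNReal.ofReal √(t ^ 2 - q) =
      ∫⁻ z in Ioi 0, (Ioi √(z ^ 2 + q)).indicator 1 t := by
    have hset : Ioo 0 √(t ^ 2 - q) = {z | t ∈ Ioi √(z ^ 2 + q)} ∩ Ioi 0 := by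
      ext z
      simp only [mem_Ioo, mem_inter_iff, mem_ofPred_eq, mem_Ioi, sqrt_lt' ht]
      rw [and_comm, and_congr_left fun hz => by rw [lt_sqrt hz.le, lt_sub_iff_add_lt]]
    have hmeas : MeasurableSet {z | t ∈ Ioi √(z ^ 2 + q)} :=
      measurableSet_lt (f := fun z => √(z ^ 2 + q)) (by fun_prop) measurable_const
    have hind : (fun z => (Ioi √(z ^ 2 + q)).indicator (1 : ℝ → ENNReal) t) =
        {z | t ∈ Ioi √(z ^ 2 + q)}.indicator 1 := rfl
    rw [hind, lintegral_indicator_one hmeas, Measure.restrict_apply hmeas, ← hset, volume_Ioo,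
      sub_zero]
  calc ∫⁻ t in Ioi 0, ENNReal.ofReal (√(t ^ 2 - q)) * ENNReal.ofReal (rexp (-(s * t)))
    _ = ∫⁻ t in Ioi 0, ∫⁻ z in Ioi 0,
          (Ioi √(z ^ 2 + q)).indicator (fun t => ENNReal.ofReal (rexp (-(s * t)))) t := by
        refine setLIntegral_congr_fun measurableSet_Ioi fun t ht => ?_
        simp only [hlayer t ht]
        rw [← lintegral_mul_const' _ _ ENNReal.ofReal_ne_top]
        simp only [indicator, ite_mul, Pi.one_apply, one_mul, zero_mul]
    _ = ∫⁻ z in Ioi 0, ∫⁻ t in Ioi 0,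
          (Ioi √(z ^ 2 + q)).indicator (fun t => ENNReal.ofReal (rexp (-(s * t)))) t := by
        refine lintegral_lintegral_swap (Measurable.aemeasurable ?_)
        exact Measurable.indicator (f := fun p : ℝ × ℝ => ENNReal.ofReal (rexp (-(s * p.1))))
          (s := {p | √(p.2 ^ 2 + q) < p.1}) (by fun_prop)
          (measurableSet_lt (by fun_prop) (by fun_prop))
    _ = ∫⁻ z in Ioi 0, ENNReal.ofReal (rexp (-(s * √(z ^ 2 + q))) / s) := by
        refine lintegral_congr fun z => ?_
        rw [lintegral_indicator measurableSet_Ioi, Measure.restrict_restrict measurableSet_Ioi,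
          inter_eq_left.2 (Ioi_subset_Ioi (sqrt_nonneg _)), lintegral_Ioi_exp_neg_mul hs]

lemma lintegral_Ioi_inv_sqrt_mul_exp_neg_sq_div {u : ℝ} (hu : 0 < u) :
    ∫⁻ z in Ioi 0, ENNReal.ofReal ((√(π * u))⁻¹ * rexp (-(z ^ 2 / (4 * u)))) = 1 := by
  have hexp (z : ℝ) : -(z ^ 2 / (4 * u)) = -(1 / (4 * u)) * z ^ 2 := by ring
  have hsqrt : √(π / (1 / (4 * u))) = 2 * √(π * u) := by
    rw [← sqrt_sq zero_le_two, ← sqrt_mul (by positivity), div_div_eq_mul_div, div_one]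
    congr 1
    ring
  simp only [hexp]
  rw [← ofReal_integral_eq_lintegral_ofReal
    ((integrable_exp_neg_mul_sq (by positivity)).integrableOn.const_mul _)
    (ae_of_all _ fun _ => by positivity), integral_const_mul, integral_gaussian_Ioi, hsqrt,
    mul_div_cancel_left₀ _ two_ne_zero, inv_mul_cancel₀ (by positivity), ENNReal.ofReal_one]

/-- A closed form of the left side involves a Bessel function; this Gaussian mixture over `u` is
what the theta transformation can be applied to. -/
lemma lintegral_sqrt_sq_sub_mul_exp {q s : ℝ} (hq : 0 ≤ q) (hs : 0 < s) :
    ∫⁻ t in Ioi 0, ENNReal.ofReal (√(t ^ 2 - q)) * ENNReal.ofReal (rexp (-(s * t))) =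
      ∫⁻ u in Ioi 0, ENNReal.ofReal (rexp (-(u * s ^ 2))) *
        ENNReal.ofReal (rexp (-(q / (4 * u)))) := by
  have hsplit (u z : ℝ) :
      ENNReal.ofReal ((√(π * u))⁻¹ * rexp (-(u * s ^ 2) - √(z ^ 2 + q) ^ 2 / (4 * u))) =
      ENNReal.ofReal (rexp (-(u * s ^ 2))) * ENNReal.ofReal (rexp (-(q / (4 * u)))) *
        ENNReal.ofReal ((√(π * u))⁻¹ * rexp (-(z ^ 2 / (4 * u)))) := by
    rw [sq_sqrt (by positivity), ← ENNReal.ofReal_mul (exp_pos _).le,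
      ← ENNReal.ofReal_mul (by positivity), mul_left_comm, ← exp_add, ← exp_add]
    ring_nf
  calc _ = ∫⁻ z in Ioi 0, ∫⁻ u in Ioi 0,
          ENNReal.ofReal ((√(π * u))⁻¹ * rexp (-(u * s ^ 2) - √(z ^ 2 + q) ^ 2 / (4 * u))) := by
        rw [lintegral_sqrt_sq_sub_mul_exp_eq q hs]
        refine setLIntegral_congr_fun measurableSet_Ioi fun z (hz : 0 < z) => ?_
        exact (lintegral_inv_sqrt_mul_exp_neg_sub_div hs (by positivity)).symm
    _ = ∫⁻ u in Ioi 0, ∫⁻ z in Ioi 0,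
          ENNReal.ofReal ((√(π * u))⁻¹ * rexp (-(u * s ^ 2) - √(z ^ 2 + q) ^ 2 / (4 * u))) :=
        lintegral_lintegral_swap (by fun_prop)
    _ = _ := by
        refine setLIntegral_congr_fun measurableSet_Ioi fun u hu => ?_
        simp only [hsplit]
        rw [lintegral_const_mul _ (by fun_prop), lintegral_Ioi_inv_sqrt_mul_exp_neg_sq_div hu,
          mul_one]

end Subordination

section LatticePoints

open MeasureTheory Set

/-- The squared Euclidean length of a vector of `ℤ²`, as a natural number. -/
def sqNorm (v : ℤ × ℤ) : ℕ := v.1.natAbs ^ 2 + v.2.natAbs ^ 2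

lemma natCast_sqNorm {R : Type*} [CommRing R] (v : ℤ × ℤ) :
    (sqNorm v : R) = (v.1 : R) ^ 2 + (v.2 : R) ^ 2 := by
  have h : (sqNorm v : ℤ) = v.1 ^ 2 + v.2 ^ 2 := by simp [sqNorm]
  exact_mod_cast congrArg (Int.cast : ℤ → R) h

lemma sqNorm_eq_zero {v : ℤ × ℤ} : sqNorm v = 0 ↔ v = 0 := by
  simp [sqNorm, Prod.ext_iff]

lemma sqNorm_pos (v : {v : ℤ × ℤ // v ≠ 0}) : 0 < sqNorm v :=
  Nat.pos_of_ne_zero (sqNorm_eq_zero.not.2 v.2)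

lemma norm_sq_le_sqNorm (v : ℤ × ℤ) : ‖v‖ ^ 2 ≤ sqNorm v := by
  rw [natCast_sqNorm, Prod.norm_def, Int.norm_eq_abs, Int.norm_eq_abs, ← sq_abs (v.1 : ℝ),
    ← sq_abs (v.2 : ℝ)]
  rcases max_choice |(v.1 : ℝ)| |(v.2 : ℝ)| with h | h <;> rw [h] <;> simp [sq_nonneg]

lemma summable_inv_sqNorm_sq : Summable fun v : ℤ × ℤ => ((sqNorm v : ℝ) ^ 2)⁻¹ := by
  have hnorm : Summable fun v : ℤ × ℤ => (‖v‖ ^ 4)⁻¹ := by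
    have h := EisensteinSeries.summable_one_div_norm_rpow (k := 4) (by norm_num)
    rw [← (finTwoArrowEquiv ℤ).symm.summable_iff] at h
    refine h.congr fun v => ?_
    rw [Function.comp_apply, rpow_neg (norm_nonneg _)]
    congr 1
    simp [Pi.norm_def, Prod.norm_def, Fin.univ_succ]
  refine hnorm.of_nonneg_of_le (fun v => by positivity) fun v => ?_
  by_cases hv : v = 0
  · simp [hv, sqNorm]
  · have := norm_pos_iff.2 hv
    rw [show 4 = 2 * 2 from rfl, pow_mul]
    gcongr
    exact norm_sq_le_sqNorm v

lemma finite_setOf_sqNorm_eq (m : ℕ) : {v | sqNorm v = m}.Finite := by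
  refine (isCompact_closedBall (0 : ℤ × ℤ) √m).finite_of_discrete.subset fun v hv => ?_
  rw [mem_closedBall_zero_iff]
  exact le_sqrt_of_sq_le ((norm_sq_le_sqNorm v).trans_eq (congrArg Nat.cast hv))

lemma r2_eq_ncard_sqNorm (m : ℕ) : r2 m = {v | sqNorm v = m}.ncard := by
  rw [r2]
  congr 1
  ext v
  rw [mem_ofPred_eq, mem_ofPred_eq, ← Nat.cast_inj (R := ℤ), natCast_sqNorm]
  rfl

lemma tsum_comp_sqNorm (f : ℕ → ENNReal) : ∑' v, f (sqNorm v) = ∑' m, r2 m * f m := by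
  rw [← ENNReal.tsum_fiberwise _ sqNorm]
  refine tsum_congr fun m => ?_
  have hconst (v : sqNorm ⁻¹' {m}) : f (sqNorm v) = f m := congrArg f v.2
  have hcard : (sqNorm ⁻¹' {m}).encard = r2 m :=
    r2_eq_ncard_sqNorm m ▸ (finite_setOf_sqNorm_eq m).cast_ncard_eq.symm
  rw [tsum_congr hconst, ENNReal.tsum_set_const, hcard, ENat.toENNReal_coe]

lemma summable_exp_neg_mul_int_sq {a : ℝ} (ha : 0 < a) :
    Summable fun n : ℤ => rexp (-(a * (n : ℝ) ^ 2)) := by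
  refine (summable_pow_mul_jacobiTheta₂_term_bound 0 (T := a / π) (by positivity) 0).congr
    fun n => ?_
  rw [pow_zero, one_mul]
  congr 1
  field_simp
  ring

lemma tsum_exp_neg_int_sq_div {u : ℝ} (hu : 0 < u) :
    ∑' n : ℤ, ENNReal.ofReal (rexp (-((n : ℝ) ^ 2 / (4 * u)))) = ENNReal.ofReal √(4 * π * u) *
      ∑' n : ℤ, ENNReal.ofReal (rexp (-(4 * π ^ 2 * u * (n : ℝ) ^ 2))) := by
  have hdiv (n : ℤ) : (n : ℝ) ^ 2 / (4 * u) = 1 / (4 * u) * (n : ℝ) ^ 2 := by ring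
  have hleft (n : ℤ) : -π * (1 / (4 * π * u)) * (n : ℝ) ^ 2 = -(1 / (4 * u) * (n : ℝ) ^ 2) := by
    field_simp
  have hright (n : ℤ) :
      -π / (1 / (4 * π * u)) * (n : ℝ) ^ 2 = -(4 * π ^ 2 * u * (n : ℝ) ^ 2) := by
    field_simp
  have hfactor : 1 / (1 / (4 * π * u)) ^ (1 / 2 : ℝ) = √(4 * π * u) := by
    rw [← sqrt_eq_rpow, one_div (4 * π * u), sqrt_inv, one_div, inv_inv]
  have hpoisson := Real.tsum_exp_neg_mul_int_sq (a := 1 / (4 * π * u)) (by positivity)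
  simp only [hleft, hright, hfactor] at hpoisson
  simp only [hdiv]
  rw [← ENNReal.ofReal_tsum_of_nonneg (fun n => (exp_pos _).le)
      (summable_exp_neg_mul_int_sq (by positivity)),
    ← ENNReal.ofReal_tsum_of_nonneg (fun n => (exp_pos _).le)
      (summable_exp_neg_mul_int_sq (by positivity)), ← ENNReal.ofReal_mul (sqrt_nonneg _),
    hpoisson]

lemma tsum_exp_neg_mul_sqNorm (a : ℝ) :
    ∑' v, ENNReal.ofReal (rexp (-(a * sqNorm v))) =
      (∑' n : ℤ, ENNReal.ofReal (rexp (-(a * (n : ℝ) ^ 2)))) ^ 2 := by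
  rw [sq, ← ENNReal.tsum_mul_right, ENNReal.tsum_prod']
  refine tsum_congr fun m => ?_
  rw [← ENNReal.tsum_mul_left]
  refine tsum_congr fun n => ?_
  rw [← ENNReal.ofReal_mul (exp_pos _).le, ← exp_add, natCast_sqNorm]
  ring_nf

lemma tsum_exp_neg_sqNorm_div {u : ℝ} (hu : 0 < u) :
    ∑' v, ENNReal.ofReal (rexp (-(sqNorm v / (4 * u)))) = ENNReal.ofReal (4 * π * u) *
      ∑' v, ENNReal.ofReal (rexp (-(4 * π ^ 2 * u * sqNorm v))) := by
  have hdiv (x : ℝ) : x / (4 * u) = (4 * u)⁻¹ * x := by ring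
  rw [tsum_exp_neg_mul_sqNorm]
  simp only [hdiv]
  rw [tsum_exp_neg_mul_sqNorm]
  simp only [← hdiv]
  rw [tsum_exp_neg_int_sq_div hu, mul_pow, ← ENNReal.ofReal_pow (sqrt_nonneg _),
    sq_sqrt (by positivity)]

lemma integral_Ioi_pow_mul_exp_neg_mul (k : ℕ) {c : ℝ} (hc : 0 < c) :
    ∫ t in Ioi 0, t ^ k * rexp (-(c * t)) = k.factorial / c ^ (k + 1) := by
  have h := Real.integral_rpow_mul_exp_neg_mul_Ioi (a := (k + 1 : ℕ)) (by positivity) hc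
  rw [rpow_natCast, one_div_pow, Nat.cast_add_one, Gamma_nat_eq_factorial, one_div_mul_eq_div] at h
  simpa only [add_sub_cancel_right, rpow_natCast] using h

lemma integrableOn_Ioi_pow_mul_exp_neg_mul (k : ℕ) {c : ℝ} (hc : 0 < c) :
    IntegrableOn (fun t => t ^ k * rexp (-(c * t))) (Ioi 0) := by
  refine not_imp_comm.1 integral_undef ?_
  rw [integral_Ioi_pow_mul_exp_neg_mul k hc]
  positivity

lemma lintegral_Ioi_mul_exp_neg_mul {c : ℝ} (hc : 0 < c) :
    ∫⁻ u in Ioi 0, ENNReal.ofReal (u * rexp (-(c * u))) = ENNReal.ofReal (1 / c ^ 2) := by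
  have hint := integrableOn_Ioi_pow_mul_exp_neg_mul 1 hc
  have heval := integral_Ioi_pow_mul_exp_neg_mul 1 hc
  simp only [pow_one, Nat.factorial_one, Nat.cast_one] at hint heval
  rw [← heval, ofReal_integral_eq_lintegral_ofReal hint]
  exact ae_restrict_of_forall_mem measurableSet_Ioi fun u hu => mul_nonneg hu.le (exp_pos _).le

/-- The sum of `√(t² - |v|²)` over the points `v` of `ℤ²` in the disc of radius `t`, grouped by
the value of `|v|²`; up to a factor `√2 * t` it is the Riesz mean `Sx0 (t ^ 4)`. -/
noncomputable def latticeSum (t : ℝ) : ℝ :=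
  ∑ m ∈ Finset.range (⌊t ^ 2⌋₊ + 1), (r2 m : ℝ) * √(t ^ 2 - m)

lemma latticeSum_nonneg (t : ℝ) : 0 ≤ latticeSum t :=
  Finset.sum_nonneg fun _ _ => by positivity

lemma ofReal_latticeSum (t : ℝ) :
    ENNReal.ofReal (latticeSum t) = ∑' v, ENNReal.ofReal √(t ^ 2 - sqNorm v) := by
  rw [tsum_comp_sqNorm fun m => ENNReal.ofReal √(t ^ 2 - m),
    tsum_eq_sum (s := Finset.range (⌊t ^ 2⌋₊ + 1)), latticeSum,
    ENNReal.ofReal_sum_of_nonneg fun m _ => by positivity]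
  · simp [ENNReal.ofReal_mul]
  · intro m hm
    have hlt : t ^ 2 < m := Nat.lt_of_floor_lt (by simpa using hm)
    rw [sqrt_eq_zero_of_nonpos (by linarith), ENNReal.ofReal_zero, mul_zero]

lemma latticeSum_le_latticeSum {a b : ℝ} (ha : 0 ≤ a) (hab : a ≤ b) :
    latticeSum a ≤ latticeSum b := by
  rw [← ENNReal.ofReal_le_ofReal_iff (latticeSum_nonneg b), ofReal_latticeSum, ofReal_latticeSum]
  gcongr

@[fun_prop]
lemma measurable_latticeSum : Measurable latticeSum := by
  have h : latticeSum = fun t => (∑' v, ENNReal.ofReal √(t ^ 2 - sqNorm v)).toReal := by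
    ext t
    rw [← ofReal_latticeSum, ENNReal.toReal_ofReal (latticeSum_nonneg t)]
  rw [h]
  exact (Measurable.tsum fun v => by fun_prop).ennreal_toReal

lemma lintegral_latticeSum_mul_exp {s : ℝ} (hs : 0 < s) :
    ∫⁻ t in Ioi 0, ENNReal.ofReal (latticeSum t * rexp (-(s * t))) =
      ∑' v, ENNReal.ofReal (4 * π / (s ^ 2 + 4 * π ^ 2 * sqNorm v) ^ 2) := by
  have htheta (u : ℝ) (hu : 0 < u) :
      ∑' v, ENNReal.ofReal (rexp (-(u * s ^ 2))) *
        ENNReal.ofReal (rexp (-(sqNorm v / (4 * u)))) =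
      ∑' v, ENNReal.ofReal (4 * π) *
        ENNReal.ofReal (u * rexp (-((s ^ 2 + 4 * π ^ 2 * sqNorm v) * u))) := by
    rw [ENNReal.tsum_mul_left, ENNReal.tsum_mul_left, tsum_exp_neg_sqNorm_div hu, mul_left_comm,
      ENNReal.ofReal_mul (by positivity), mul_assoc, ← ENNReal.tsum_mul_left,
      ← ENNReal.tsum_mul_left]
    congr 1
    refine tsum_congr fun v => ?_
    rw [← ENNReal.ofReal_mul (exp_pos _).le, ← ENNReal.ofReal_mul hu.le, ← exp_add]
    ring_nf
  calc _ = ∑' v, ∫⁻ t in Ioi 0,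
          ENNReal.ofReal √(t ^ 2 - sqNorm v) * ENNReal.ofReal (rexp (-(s * t))) := by
        rw [← lintegral_tsum fun v => by fun_prop]
        refine lintegral_congr fun t => ?_
        rw [ENNReal.ofReal_mul (latticeSum_nonneg t), ofReal_latticeSum, ENNReal.tsum_mul_right]
    _ = ∫⁻ u in Ioi 0, ∑' v, ENNReal.ofReal (rexp (-(u * s ^ 2))) *
          ENNReal.ofReal (rexp (-(sqNorm v / (4 * u)))) := by
        rw [lintegral_tsum fun v => by fun_prop]
        exact tsum_congr fun v => lintegral_sqrt_sq_sub_mul_exp (Nat.cast_nonneg _) hs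
    _ = ∑' v, ∫⁻ u in Ioi 0, ENNReal.ofReal (4 * π) *
          ENNReal.ofReal (u * rexp (-((s ^ 2 + 4 * π ^ 2 * sqNorm v) * u))) := by
        rw [setLIntegral_congr_fun measurableSet_Ioi htheta, lintegral_tsum fun v => by fun_prop]
    _ = _ := by
        refine tsum_congr fun v => ?_
        rw [lintegral_const_mul' _ _ ENNReal.ofReal_ne_top,
          lintegral_Ioi_mul_exp_neg_mul (by positivity), ← ENNReal.ofReal_mul (by positivity),
          mul_one_div]

end LatticePoints

section LaplaceTransform

open Complex MeasureTheory Set Filter Topology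

lemma isOpen_re_pos : IsOpen {s : ℂ | 0 < s.re} := isOpen_lt continuous_const continuous_re

lemma eqOn_re_pos_of_eq_ofReal {F G : ℂ → ℂ} (hF : DifferentiableOn ℂ F {s | 0 < s.re})
    (hG : DifferentiableOn ℂ G {s | 0 < s.re}) (heq : ∀ σ : ℝ, 0 < σ → F σ = G σ) :
    EqOn F G {s | 0 < s.re} := by
  refine (hF.analyticOnNhd isOpen_re_pos).eqOn_of_preconnected_of_frequently_eq
    (hG.analyticOnNhd isOpen_re_pos) (convex_halfSpace_re_gt 0).isPreconnected (z₀ := 1)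
    (by simp) ?_
  have hreal : Tendsto ((↑) : ℝ → ℂ) (𝓝[>] 1) (𝓝[≠] 1) := by
    refine tendsto_nhdsWithin_iff.2 ⟨?_, ?_⟩
    · exact (continuous_ofReal.tendsto' 1 1 ofReal_one).mono_left nhdsWithin_le_nhds
    · filter_upwards [self_mem_nhdsWithin] with σ hσ
      exact ofReal_eq_one.not.2 (ne_of_gt hσ)
  refine hreal.frequently (Eventually.frequently ?_)
  filter_upwards [self_mem_nhdsWithin] with σ hσ
  exact heq σ (zero_lt_one.trans hσ)

lemma norm_ofReal_mul_cexp_neg (x t : ℝ) (s : ℂ) :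
    ‖(x : ℂ) * cexp (-(s * t))‖ = ‖x * rexp (-(s.re * t))‖ := by
  simp [norm_exp]

lemma integrableOn_mul_cexp_neg {h : ℝ → ℝ} {s : ℂ}
    (hint : IntegrableOn (fun t => h t * rexp (-(s.re * t))) (Ioi 0)) :
    IntegrableOn (fun t : ℝ => (h t : ℂ) * cexp (-(s * t))) (Ioi 0) := by
  have htwist (t : ℝ) : (h t : ℂ) * cexp (-(s * t)) =
      ((h t * rexp (-(s.re * t)) : ℝ) : ℂ) * cexp (-(s.im * t * I)) := by
    conv_lhs => rw [← re_add_im s]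
    rw [ofReal_mul, ofReal_exp, mul_assoc, ← Complex.exp_add]
    congr 2
    push_cast
    ring
  refine Integrable.mono' hint.norm ?_ (ae_of_all _ fun t => (norm_ofReal_mul_cexp_neg _ _ _).le)
  simp only [htwist]
  exact (continuous_ofReal.comp_aestronglyMeasurable hint.aestronglyMeasurable).mul
    (by fun_prop : Continuous fun t : ℝ => cexp (-(s.im * t * I))).aestronglyMeasurable

lemma mul_exp_neg_two_mul_le {a : ℝ} (ha : 0 < a) (t : ℝ) :
    t * rexp (-(2 * a * t)) ≤ a⁻¹ * rexp (-(a * t)) := by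
  have h : a * t ≤ rexp (a * t) := by linarith [add_one_le_exp (a * t)]
  calc t * rexp (-(2 * a * t)) = a⁻¹ * (a * t) * rexp (-(2 * a * t)) := by
        rw [inv_mul_cancel_left₀ ha.ne']
    _ ≤ a⁻¹ * rexp (a * t) * rexp (-(2 * a * t)) := by gcongr
    _ = a⁻¹ * rexp (-(a * t)) := by rw [mul_assoc, ← Real.exp_add]; ring_nf

lemma norm_mul_cexp_neg_mul_neg_le {a t : ℝ} {s : ℂ} (ha : 0 < a) (ht : 0 ≤ t) (hs : 2 * a ≤ s.re)
    (x : ℝ) : ‖(x : ℂ) * cexp (-(s * t)) * (-t)‖ ≤ a⁻¹ * ‖x * rexp (-(a * t))‖ := by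
  calc ‖(x : ℂ) * cexp (-(s * t)) * (-t)‖ = ‖x‖ * (t * rexp (-(s.re * t))) := by
        rw [norm_mul, norm_ofReal_mul_cexp_neg, norm_neg, norm_real, Real.norm_of_nonneg ht,
          norm_mul, Real.norm_of_nonneg (Real.exp_pos _).le]
        ring
    _ ≤ ‖x‖ * (t * rexp (-(2 * a * t))) := by gcongr
    _ ≤ ‖x‖ * (a⁻¹ * rexp (-(a * t))) := by
        gcongr ‖x‖ * ?_
        exact mul_exp_neg_two_mul_le ha t
    _ = a⁻¹ * ‖x * rexp (-(a * t))‖ := by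
        rw [norm_mul, Real.norm_of_nonneg (Real.exp_pos _).le, mul_left_comm]

lemma differentiableOn_integral_mul_cexp_neg {h : ℝ → ℝ}
    (hint : ∀ σ : ℝ, 0 < σ → IntegrableOn (fun t => h t * rexp (-(σ * t))) (Ioi 0)) :
    DifferentiableOn ℂ (fun s => ∫ t in Ioi (0 : ℝ), (h t : ℂ) * cexp (-(s * t)))
      {s | 0 < s.re} := by
  intro s₀ (hs₀ : 0 < s₀.re)
  have hσ : 0 < s₀.re / 4 := by positivity
  have hnhds : {s : ℂ | s₀.re / 2 < s.re} ∈ 𝓝 s₀ :=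
    (isOpen_lt continuous_const continuous_re).mem_nhds (half_lt_self hs₀)
  have hmeas (s : ℂ) (hs : 0 < s.re) : AEStronglyMeasurable
      (fun t : ℝ => (h t : ℂ) * cexp (-(s * t))) (volume.restrict (Ioi 0)) :=
    (integrableOn_mul_cexp_neg (hint _ hs)).aestronglyMeasurable
  have hderiv (t : ℝ) (s : ℂ) : HasDerivAt (fun s : ℂ => (h t : ℂ) * cexp (-(s * t)))
      ((h t : ℂ) * cexp (-(s * t)) * (-t)) s :=
    ((hasDerivAt_mul_const (t : ℂ)).fun_neg.cexp.const_mul (h t : ℂ)).congr_deriv (by ring)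
  refine (hasDerivAt_integral_of_dominated_loc_of_deriv_le
    (F := fun s t => (h t : ℂ) * cexp (-(s * (t : ℝ)))) hnhds ?_
    (integrableOn_mul_cexp_neg (hint _ hs₀)) ((hmeas _ hs₀).mul (by fun_prop))
    (ae_restrict_of_forall_mem measurableSet_Ioi fun t ht s (hs : s₀.re / 2 < s.re) =>
      norm_mul_cexp_neg_mul_neg_le hσ (le_of_lt ht) (by linarith) (h t))
    ((hint _ hσ).norm.const_mul _)
    (ae_of_all _ fun t s _ => hderiv t s)).2.differentiableAt.differentiableWithinAt
  filter_upwards [isOpen_re_pos.mem_nhds hs₀] with s hs using hmeas s hs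

/-- `F` is the Laplace transform of `h` on the right half-plane, with absolute convergence. -/
def HasLaplace (h : ℝ → ℝ) (F : ℂ → ℂ) : Prop :=
  ∀ s : ℂ, 0 < s.re → IntegrableOn (fun t : ℝ => (h t : ℂ) * cexp (-(s * t))) (Ioi 0) ∧
    ∫ t in Ioi (0 : ℝ), (h t : ℂ) * cexp (-(s * t)) = F s

namespace HasLaplace

variable {h g : ℝ → ℝ} {F G : ℂ → ℂ}

lemma of_ofReal
    (hint : ∀ σ : ℝ, 0 < σ → IntegrableOn (fun t => h t * rexp (-(σ * t))) (Ioi 0))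
    (hF : DifferentiableOn ℂ F {s | 0 < s.re})
    (heq : ∀ σ : ℝ, 0 < σ → ((∫ t in Ioi 0, h t * rexp (-(σ * t)) : ℝ) : ℂ) = F σ) :
    HasLaplace h F := by
  refine fun s hs => ⟨integrableOn_mul_cexp_neg (hint _ hs), ?_⟩
  refine eqOn_re_pos_of_eq_ofReal (differentiableOn_integral_mul_cexp_neg hint) hF
    (fun σ hσ => ?_) hs
  rw [← heq σ hσ, ← integral_complex_ofReal]
  push_cast
  rfl

lemma add (hF : HasLaplace h F) (hG : HasLaplace g G) : HasLaplace (h + g) (F + G) := by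
  intro s hs
  simp only [Pi.add_apply, ofReal_add, add_mul]
  exact ⟨(hF s hs).1.add (hG s hs).1, by
    rw [integral_add (hF s hs).1 (hG s hs).1, (hF s hs).2, (hG s hs).2]⟩

lemma sub (hF : HasLaplace h F) (hG : HasLaplace g G) : HasLaplace (h - g) (F - G) := by
  intro s hs
  simp only [Pi.sub_apply, ofReal_sub, sub_mul]
  exact ⟨(hF s hs).1.sub (hG s hs).1, by
    rw [integral_sub (hF s hs).1 (hG s hs).1, (hF s hs).2, (hG s hs).2]⟩

lemma const_mul (c : ℝ) (hF : HasLaplace h F) :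
    HasLaplace (fun t => c * h t) (fun s => c * F s) := by
  intro s hs
  simp only [ofReal_mul, mul_assoc]
  exact ⟨(hF s hs).1.const_mul _, by rw [integral_const_mul, (hF s hs).2]⟩

lemma pow (k : ℕ) : HasLaplace (fun t => t ^ k) (fun s => k.factorial / s ^ (k + 1)) := by
  refine of_ofReal (fun σ hσ => integrableOn_Ioi_pow_mul_exp_neg_mul k hσ) ?_ fun σ hσ => ?_
  · refine (differentiableOn_const _).div (differentiableOn_pow _) fun s (hs : 0 < s.re) => ?_
    exact pow_ne_zero _ fun h => by simp [h] at hs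
  · rw [integral_Ioi_pow_mul_exp_neg_mul k hσ]
    push_cast
    rfl

end HasLaplace

end LaplaceTransform

section DualSum

open Complex MeasureTheory Set Filter Topology

lemma re_mul_norm_le_norm_sq_add_sq {s : ℂ} (hs : 0 < s.re) (k : ℝ) :
    s.re * ‖s‖ ≤ ‖s ^ 2 + k ^ 2‖ := by
  have hfactor : s ^ 2 + (k : ℂ) ^ 2 = (s + k * I) * (s - k * I) := by
    linear_combination (k : ℂ) ^ 2 * I_sq
  have hplus : s.re ≤ ‖s + k * I‖ := by simpa using re_le_norm (s + k * I)
  have hminus : s.re ≤ ‖s - k * I‖ := by simpa using re_le_norm (s - k * I)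
  have hsum : 2 * ‖s‖ ≤ ‖s + k * I‖ + ‖s - k * I‖ := by
    simpa [← two_mul] using norm_add_le (s + k * I) (s - k * I)
  rw [hfactor, norm_mul]
  cases le_total ‖s + k * I‖ ‖s - k * I‖ <;> nlinarith

lemma re_mul_sq_le_norm_sq_add_sq {s : ℂ} (hs : 0 < s.re) (k : ℝ) :
    s.re * k ^ 2 ≤ 2 * ‖s‖ * ‖s ^ 2 + k ^ 2‖ := by
  have hk : k ^ 2 ≤ ‖s ^ 2 + k ^ 2‖ + ‖s‖ ^ 2 := by
    have h := norm_sub_le (s ^ 2 + (k : ℂ) ^ 2) (s ^ 2)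
    rw [add_sub_cancel_left] at h
    simpa using h
  calc s.re * k ^ 2 ≤ s.re * ‖s ^ 2 + k ^ 2‖ + s.re * ‖s‖ * ‖s‖ := by nlinarith
    _ ≤ ‖s‖ * ‖s ^ 2 + k ^ 2‖ + ‖s ^ 2 + k ^ 2‖ * ‖s‖ := by
        gcongr
        · exact re_le_norm s
        · exact re_mul_norm_le_norm_sq_add_sq hs k
    _ = 2 * ‖s‖ * ‖s ^ 2 + k ^ 2‖ := by ring

/-- The contribution to the Laplace transform of `latticeSum` of one point at squared distance `q`
from the origin in the dual lattice. -/
noncomputable def dualTerm (s : ℂ) (q : ℕ) : ℂ := 4 * π / (s ^ 2 + 4 * π ^ 2 * q) ^ 2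

/-- The Laplace transform of the error term of `latticeSum`: by Poisson summation, a sum over the
nonzero points of the dual lattice. -/
noncomputable def dualSum (s : ℂ) : ℂ := ∑' v : {v : ℤ × ℤ // v ≠ 0}, dualTerm s (sqNorm v)

lemma sq_two_pi_mul_sqrt (q : ℕ) : (2 * π * √q) ^ 2 = 4 * π ^ 2 * q := by
  rw [mul_pow, sq_sqrt (Nat.cast_nonneg q)]
  ring

lemma re_mul_le_norm_sq_add {s : ℂ} (hs : 0 < s.re) (q : ℕ) :
    s.re * (4 * π ^ 2 * q) ≤ 2 * ‖s‖ * ‖s ^ 2 + 4 * π ^ 2 * q‖ := by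
  have h := re_mul_sq_le_norm_sq_add_sq hs (2 * π * √q)
  rw [← ofReal_pow, sq_two_pi_mul_sqrt] at h
  exact_mod_cast h

lemma norm_dualTerm_le {s : ℂ} (hs : 0 < s.re) {q : ℕ} (hq : 0 < q) :
    ‖dualTerm s q‖ ≤ (‖s‖ / s.re) ^ 2 / π ^ 3 * ((q : ℝ) ^ 2)⁻¹ := by
  have hnorm : 0 < ‖s‖ := hs.trans_le (re_le_norm s)
  have hlower : s.re * (4 * π ^ 2 * q) / (2 * ‖s‖) ≤ ‖s ^ 2 + 4 * π ^ 2 * q‖ := by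
    rw [div_le_iff₀' (by positivity)]
    exact re_mul_le_norm_sq_add hs q
  rw [dualTerm, norm_div, norm_pow, norm_mul, norm_real, Complex.norm_ofNat,
    Real.norm_of_nonneg pi_pos.le]
  calc 4 * π / ‖s ^ 2 + 4 * π ^ 2 * q‖ ^ 2
      ≤ 4 * π / (s.re * (4 * π ^ 2 * q) / (2 * ‖s‖)) ^ 2 := by gcongr
    _ = (‖s‖ / s.re) ^ 2 / π ^ 3 * ((q : ℝ) ^ 2)⁻¹ := by
        field_simp
        norm_num

lemma differentiableAt_dualTerm {s : ℂ} (hs : 0 < s.re) {q : ℕ} (hq : 0 < q) :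
    DifferentiableAt ℂ (fun s => dualTerm s q) s := by
  refine (differentiableAt_const _).div (by fun_prop) (pow_ne_zero 2 fun h => ?_)
  have hlower := re_mul_le_norm_sq_add hs q
  rw [h, norm_zero, mul_zero] at hlower
  exact hlower.not_gt (by positivity)

lemma summable_inv_sqNorm_sq_ne_zero :
    Summable fun v : {v : ℤ × ℤ // v ≠ 0} => ((sqNorm v : ℝ) ^ 2)⁻¹ :=
  summable_inv_sqNorm_sq.subtype _

lemma differentiableOn_dualSum : DifferentiableOn ℂ dualSum {s | 0 < s.re} := by
  intro s₀ (hs₀ : 0 < s₀.re)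
  let U : Set ℂ := {s | s₀.re / 2 < s.re} ∩ Metric.ball 0 (‖s₀‖ + 1)
  have hU : IsOpen U := (isOpen_lt continuous_const continuous_re).inter Metric.isOpen_ball
  have hmem : s₀ ∈ U := ⟨half_lt_self hs₀, by simp⟩
  have hre (s : ℂ) (hs : s ∈ U) : 0 < s.re := (half_pos hs₀).trans hs.1
  have hdiff : DifferentiableOn ℂ dualSum U := by
    refine differentiableOn_tsum_of_summable_norm
      (summable_inv_sqNorm_sq_ne_zero.mul_left (((‖s₀‖ + 1) / (s₀.re / 2)) ^ 2 / π ^ 3))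
      (fun v s hs => (differentiableAt_dualTerm (hre s hs) (sqNorm_pos v)).differentiableWithinAt)
      hU fun v s hs => ?_
    have hpos : 0 < s.re := hre s hs
    refine (norm_dualTerm_le hpos (sqNorm_pos v)).trans ?_
    have hnorm : ‖s‖ ≤ ‖s₀‖ + 1 := (mem_ball_zero_iff.1 hs.2).le
    have hhalf : s₀.re / 2 ≤ s.re := le_of_lt hs.1
    gcongr
  exact (hdiff.differentiableAt (hU.mem_nhds hmem)).differentiableWithinAt

lemma summable_inv_sq_add_sqNorm_sq (s : ℝ) : Summable fun v : {v : ℤ × ℤ // v ≠ 0} =>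
    4 * π / (s ^ 2 + 4 * π ^ 2 * sqNorm v) ^ 2 := by
  refine (summable_inv_sqNorm_sq_ne_zero.mul_left (4 * π / (4 * π ^ 2) ^ 2)).of_nonneg_of_le
    (fun v => by positivity) fun v => ?_
  have := sqNorm_pos v
  rw [← div_eq_mul_inv, div_div, ← mul_pow]
  gcongr
  exact le_add_of_nonneg_left (sq_nonneg s)

lemma lintegral_latticeSum_mul_exp_eq_add {s : ℝ} (hs : 0 < s) :
    ∫⁻ t in Ioi 0, ENNReal.ofReal (latticeSum t * rexp (-(s * t))) =
      ENNReal.ofReal (4 * π / s ^ 4 +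
        ∑' v : {v : ℤ × ℤ // v ≠ 0}, 4 * π / (s ^ 2 + 4 * π ^ 2 * sqNorm v) ^ 2) := by
  let f (v : ℤ × ℤ) := ENNReal.ofReal (4 * π / (s ^ 2 + 4 * π ^ 2 * sqNorm v) ^ 2)
  rw [lintegral_latticeSum_mul_exp hs, ENNReal.ofReal_add (by positivity)
      (tsum_nonneg fun v => by positivity),
    ENNReal.ofReal_tsum_of_nonneg (fun v => by positivity) (summable_inv_sq_add_sqNorm_sq s),
    ← ENNReal.summable.tsum_add_tsum_compl (s := {0}) ENNReal.summable,
    tsum_singleton 0 f]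
  congr 2
  simp [f, sqNorm, ← pow_mul]

/-- The error in approximating `latticeSum t` by the volume `2 * π / 3 * t ^ 3` of the half-ball of
radius `t`. -/
noncomputable def latticeError (t : ℝ) : ℝ := latticeSum t - 2 * π / 3 * t ^ 3

lemma hasLaplace_latticeSum : HasLaplace latticeSum fun s => 4 * π / s ^ 4 + dualSum s := by
  have hnonneg (σ t : ℝ) : 0 ≤ latticeSum t * rexp (-(σ * t)) :=
    mul_nonneg (latticeSum_nonneg t) (Real.exp_pos _).le
  have hmeas (σ : ℝ) : AEStronglyMeasurable (fun t => latticeSum t * rexp (-(σ * t)))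
      (volume.restrict (Ioi 0)) := by fun_prop
  refine HasLaplace.of_ofReal (fun σ hσ => ⟨hmeas σ, ?_⟩) ?_ fun σ hσ => ?_
  · rw [hasFiniteIntegral_iff_ofReal (ae_of_all _ (hnonneg σ)),
      lintegral_latticeSum_mul_exp_eq_add hσ]
    exact ENNReal.ofReal_lt_top
  · refine DifferentiableOn.add ?_ differentiableOn_dualSum
    refine (differentiableOn_const _).div (differentiableOn_pow _) fun s (hs : 0 < s.re) => ?_
    exact pow_ne_zero _ fun h => by simp [h] at hs
  · rw [integral_eq_lintegral_of_nonneg_ae (ae_of_all _ (hnonneg σ)) (hmeas σ),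
      lintegral_latticeSum_mul_exp_eq_add hσ, ENNReal.toReal_ofReal (add_nonneg (by positivity)
        (tsum_nonneg fun v => by positivity)), dualSum]
    simp only [dualTerm]
    push_cast
    rfl

lemma hasLaplace_latticeError : HasLaplace latticeError dualSum := by
  convert hasLaplace_latticeSum.sub ((HasLaplace.pow 3).const_mul (2 * π / 3)) using 1
  · rfl
  · ext s
    simp [Nat.factorial]
    ring

end DualSum

section Amplitude

open Complex MeasureTheory Set Filter Topology

/-- If `F` is the Laplace transform of `h`, then `L` is the mean amplitude of the oscillation
`t * exp (-μ * t * I)` in `h`: the coefficient of a double pole of `F` at `-μ * I`. -/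
def HasAmplitude (F : ℂ → ℂ) (μ L : ℝ) : Prop :=
  Tendsto (fun σ : ℝ => (σ : ℂ) ^ 2 * F (σ - μ * I)) (𝓝[>] 0) (𝓝 (L : ℂ))

lemma HasAmplitude.sub {F G : ℂ → ℂ} {μ L M : ℝ} (hF : HasAmplitude F μ L)
    (hG : HasAmplitude G μ M) : HasAmplitude (F - G) μ (L - M) := by
  simpa [HasAmplitude, mul_sub] using Tendsto.sub hF hG

lemma tendsto_ofReal_nhdsGT_zero : Tendsto ((↑) : ℝ → ℂ) (𝓝[>] 0) (𝓝 0) :=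
  (continuous_ofReal.tendsto' 0 0 ofReal_zero).mono_left nhdsWithin_le_nhds

lemma tendsto_div_sub_mul_I (μ : ℝ) :
    Tendsto (fun σ : ℝ => (σ : ℂ) / (σ - μ * I)) (𝓝[>] 0) (𝓝 (if μ = 0 then 1 else 0)) := by
  split_ifs with hμ
  · refine tendsto_const_nhds.congr' ?_
    filter_upwards [self_mem_nhdsWithin] with σ hσ
    simp [hμ, div_self (ofReal_ne_zero.2 (ne_of_gt hσ))]
  · have hne : (0 : ℂ) - μ * I ≠ 0 := by simpa using hμ
    simpa [Pi.div_def] using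
      tendsto_ofReal_nhdsGT_zero.div (tendsto_ofReal_nhdsGT_zero.sub_const (μ * I)) hne

lemma hasAmplitude_affine (A D μ : ℝ) :
    HasAmplitude (fun s => A / s ^ 2 + D / s) μ (if μ = 0 then A else 0) := by
  have hdiv := tendsto_div_sub_mul_I μ
  have h := ((hdiv.pow 2).const_mul (A : ℂ)).add
    ((tendsto_ofReal_nhdsGT_zero.mul hdiv).const_mul (D : ℂ))
  rw [HasAmplitude]
  convert h using 2
  · rw [div_eq_mul_inv (A : ℂ), ← inv_pow]
    ring
  · split_ifs <;> simp

lemma div_sq_add_sq_eq {s k : ℂ} (c : ℂ) (hk : k ≠ 0) (hsub : s - k * I ≠ 0)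
    (hadd : s + k * I ≠ 0) :
    c / (s ^ 2 + k ^ 2) = (c / (s - k * I) - c / (s + k * I)) / (2 * k * I) := by
  have hfactor : s ^ 2 + k ^ 2 = (s - k * I) * (s + k * I) := by
    linear_combination k ^ 2 * I_sq
  rw [hfactor]
  field_simp
  ring

lemma tendsto_div_sq_add_sq {k : ℝ} (hk : k ≠ 0) (μ : ℝ) :
    Tendsto (fun σ : ℝ => (σ : ℂ) ^ 2 / ((σ - μ * I) ^ 2 + k ^ 2) ^ 2) (𝓝[>] 0)
      (𝓝 (if μ ^ 2 = k ^ 2 then -(1 / (4 * (k : ℂ) ^ 2)) else 0)) := by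
  have hsub : Tendsto (fun σ : ℝ => (σ : ℂ) / (σ - μ * I - k * I)) (𝓝[>] 0)
      (𝓝 (if μ = -k then 1 else 0)) := by
    simpa [sub_sub, add_mul, add_eq_zero_iff_eq_neg] using tendsto_div_sub_mul_I (μ + k)
  have hadd : Tendsto (fun σ : ℝ => (σ : ℂ) / (σ - μ * I + k * I)) (𝓝[>] 0)
      (𝓝 (if μ = k then 1 else 0)) := by
    simpa [sub_mul, sub_eq_zero, sub_sub_eq_add_sub, sub_add_eq_add_sub] using
      tendsto_div_sub_mul_I (μ - k)
  have hlim : (((if μ = -k then 1 else 0) - (if μ = k then 1 else 0)) / (2 * k * I) : ℂ) ^ 2 =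
      if μ ^ 2 = k ^ 2 then -(1 / (4 * (k : ℂ) ^ 2)) else 0 := by
    have hne : k ≠ -k := fun h => hk (by linarith)
    simp only [sq_eq_sq_iff_eq_or_eq_neg]
    split_ifs <;> simp_all [div_pow, mul_pow]
    all_goals ring
  rw [← hlim]
  refine (((hsub.sub hadd).div_const (2 * k * I)).pow 2).congr' ?_
  filter_upwards [self_mem_nhdsWithin] with σ (hσ : 0 < σ)
  rw [← div_sq_add_sq_eq _ (ofReal_ne_zero.2 hk)
    (fun h => hσ.ne' (by simpa using congrArg re h))
    (fun h => hσ.ne' (by simpa using congrArg re h)), div_pow]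

/-- Up to sign, the amplitude of `dualTerm · q` at `μ`. -/
noncomputable def termMass (μ : ℝ) (q : ℕ) : ℝ :=
  if μ ^ 2 = 4 * π ^ 2 * q then 1 / (4 * π * q) else 0

/-- Up to sign, the amplitude of `dualSum` at `μ`. -/
noncomputable def dualMass (μ : ℝ) : ℝ := ∑' v : {v : ℤ × ℤ // v ≠ 0}, termMass μ (sqNorm v)

lemma termMass_nonneg (μ : ℝ) (q : ℕ) : 0 ≤ termMass μ q := by
  rw [termMass]
  positivity

lemma hasAmplitude_dualTerm (μ : ℝ) {q : ℕ} (hq : 0 < q) :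
    HasAmplitude (fun s => dualTerm s q) μ (-termMass μ q) := by
  have hk : 2 * π * √q ≠ 0 := by positivity
  have h := (tendsto_div_sq_add_sq hk μ).const_mul (4 * π : ℂ)
  rw [← ofReal_pow, sq_two_pi_mul_sqrt] at h
  rw [HasAmplitude]
  convert h using 2
  · rw [dualTerm]
    push_cast
    ring
  · rw [termMass]
    split_ifs
    · push_cast
      field_simp
    · simp

lemma hasAmplitude_dualSum (μ : ℝ) : HasAmplitude dualSum μ (-dualMass μ) := by
  rw [HasAmplitude, dualMass, ← tsum_neg, ofReal_tsum]
  simp only [dualSum, ← tsum_mul_left]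
  refine tendsto_tsum_of_dominated_convergence
    (summable_inv_sqNorm_sq_ne_zero.mul_left ((1 + |μ|) ^ 2 / π ^ 3))
    (fun v => hasAmplitude_dualTerm μ (sqNorm_pos v)) ?_
  filter_upwards [Ioo_mem_nhdsGT zero_lt_one] with σ hσ v
  have hre : ((σ : ℂ) - μ * I).re = σ := by simp
  have hnorm : ‖(σ : ℂ) - μ * I‖ ≤ 1 + |μ| := by
    refine (norm_sub_le _ _).trans (add_le_add ?_ (by simp))
    rw [norm_real, Real.norm_of_nonneg hσ.1.le]
    exact hσ.2.le
  have hterm := norm_dualTerm_le (hre.symm ▸ hσ.1) (sqNorm_pos v)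
  rw [hre] at hterm
  calc ‖(σ : ℂ) ^ 2 * dualTerm (σ - μ * I) (sqNorm v)‖
      = σ ^ 2 * ‖dualTerm (σ - μ * I) (sqNorm v)‖ := by
        rw [norm_mul, norm_pow, norm_real, norm_eq_abs, sq_abs]
    _ ≤ σ ^ 2 * ((‖(σ : ℂ) - μ * I‖ / σ) ^ 2 / π ^ 3 * ((sqNorm v : ℝ) ^ 2)⁻¹) := by gcongr
    _ = ‖(σ : ℂ) - μ * I‖ ^ 2 / π ^ 3 * ((sqNorm v : ℝ) ^ 2)⁻¹ := by
        have := hσ.1.ne'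
        field_simp
    _ ≤ (1 + |μ|) ^ 2 / π ^ 3 * ((sqNorm v : ℝ) ^ 2)⁻¹ := by gcongr

end Amplitude

section RieszProduct

open Complex MeasureTheory Set Filter Topology

variable {ι : Type*} [Fintype ι]

/-- The coefficient at `x` of the Riesz product `∏ i, (1 - cos (a i * t))`, whose exponentials are
indexed by the vectors of signs `ι → SignType`. -/
noncomputable def rieszWeight (x : ι → SignType) : ℝ := ∏ i, if x i = 0 then 1 else -(1 / 2)

/-- The frequency at `x` of the Riesz product `∏ i, (1 - cos (a i * t))`. -/
def rieszFreq (a : ι → ℝ) (x : ι → SignType) : ℝ := ∑ i, (x i : ℝ) * a i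

lemma one_sub_cos_eq_sum (u : ℂ) : 1 - Complex.cos u =
    ∑ e : SignType, ((if e = 0 then 1 else -(1 / 2) : ℝ) : ℂ) * cexp (((e : ℝ) : ℂ) * u * I) := by
  simp only [SignType.univ_eq, Complex.cos]
  simp
  ring

variable [DecidableEq ι]

lemma prod_one_sub_cos_eq_sum (a : ι → ℝ) (t : ℝ) :
    ((∏ i, (1 - Real.cos (a i * t)) : ℝ) : ℂ) =
      ∑ x : ι → SignType, (rieszWeight x : ℂ) * cexp (rieszFreq a x * t * I) := by
  have hfactor (i : ι) : ((1 - Real.cos (a i * t) : ℝ) : ℂ) = 1 - Complex.cos (a i * t) := by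
    push_cast
    rfl
  simp only [ofReal_prod, hfactor, one_sub_cos_eq_sum, Fintype.prod_sum, Finset.prod_mul_distrib,
    ← Complex.exp_sum, ← Finset.sum_mul, ← mul_assoc, rieszWeight, rieszFreq, ofReal_sum,
    ofReal_mul]

namespace HasLaplace

variable {h : ℝ → ℝ} {F : ℂ → ℂ}

lemma integral_prod_one_sub_cos_mul (hF : HasLaplace h F) (a : ι → ℝ) {σ : ℝ} (hσ : 0 < σ) :
    ((∫ t in Ioi 0, (∏ i, (1 - Real.cos (a i * t))) * (h t * rexp (-(σ * t))) : ℝ) : ℂ) =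
      ∑ x : ι → SignType, (rieszWeight x : ℂ) * F (σ - rieszFreq a x * I) := by
  have hre (x : ι → SignType) : 0 < ((σ : ℂ) - rieszFreq a x * I).re := by simpa using hσ
  simp only [← (hF _ (hre _)).2, ← integral_const_mul]
  rw [← integral_finsetSum _ fun x _ => ((hF _ (hre x)).1).const_mul _, ← integral_complex_ofReal]
  refine integral_congr_ae (ae_of_all _ fun t => ?_)
  simp only [ofReal_mul, prod_one_sub_cos_eq_sum, Finset.sum_mul]
  refine Finset.sum_congr rfl fun x _ => ?_
  have hexp : cexp (-((σ - rieszFreq a x * I) * t)) =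
      cexp (rieszFreq a x * t * I) * cexp (-(σ * t)) := by
    rw [← Complex.exp_add]
    ring_nf
  rw [hexp]
  push_cast
  ring

lemma sum_rieszWeight_mul_nonneg (hF : HasLaplace h F) (hh : ∀ t, 0 < t → 0 ≤ h t) {L : ℝ → ℝ}
    (hL : ∀ μ, HasAmplitude F μ (L μ)) (a : ι → ℝ) :
    0 ≤ ∑ x : ι → SignType, rieszWeight x * L (rieszFreq a x) := by
  have hlim : Tendsto (fun σ : ℝ => ∑ x : ι → SignType,
      (rieszWeight x : ℂ) * ((σ : ℂ) ^ 2 * F (σ - rieszFreq a x * I))) (𝓝[>] 0)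
      (𝓝 (∑ x : ι → SignType, (rieszWeight x : ℂ) * (L (rieszFreq a x) : ℂ))) :=
    tendsto_finsetSum _ fun x _ => (hL (rieszFreq a x)).const_mul _
  have hre := (continuous_re.tendsto _).comp hlim
  simp only [← ofReal_mul, ← ofReal_sum, ofReal_re] at hre
  refine ge_of_tendsto hre ?_
  filter_upwards [self_mem_nhdsWithin] with σ (hσ : 0 < σ)
  simp only [Function.comp_apply, mul_left_comm _ ((σ : ℂ) ^ 2), ← Finset.mul_sum]
  rw [← hF.integral_prod_one_sub_cos_mul a hσ, ← ofReal_pow, ← ofReal_mul, ofReal_re]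
  refine mul_nonneg (sq_nonneg σ) (setIntegral_nonneg measurableSet_Ioi fun t ht => ?_)
  exact mul_nonneg (Finset.prod_nonneg fun i _ => sub_nonneg.2 (Real.cos_le_one _))
    (mul_nonneg (hh t ht) (Real.exp_pos _).le)

end HasLaplace

end RieszProduct

section SquareRootsOfPrimes

open IntermediateField

section QuadraticExtension

variable {F L : Type*} [Field F] [Field L] [Algebra F L] {K : IntermediateField F L} {α : L}

lemma exists_eq_add_mul_of_mem_adjoin_simple (hα : α ^ 2 ∈ K) {x : L} (hx : x ∈ K⟮α⟯) :
    ∃ a ∈ K, ∃ b ∈ K, x = a + b * α := by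
  have hmonic := Polynomial.monic_X_pow_sub_C (⟨α ^ 2, hα⟩ : K) two_ne_zero
  have hroot : Polynomial.aeval α (Polynomial.X ^ 2 - Polynomial.C (⟨α ^ 2, hα⟩ : K)) = 0 := by
    simp
  rw [← mem_toSubalgebra, adjoin_simple_toSubalgebra_of_isAlgebraic ⟨_, hmonic.ne_zero, hroot⟩,
    Algebra.adjoin_singleton_eq_range_aeval] at hx
  obtain ⟨P, rfl⟩ := hx
  have hdeg : (P %ₘ (Polynomial.X ^ 2 - Polynomial.C (⟨α ^ 2, hα⟩ : K))).natDegree ≤ 1 := by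
    have h := Polynomial.natDegree_modByMonic_lt P hmonic fun h => by
      simpa [Polynomial.natDegree_X_pow_sub_C] using congrArg Polynomial.natDegree h
    rw [Polynomial.natDegree_X_pow_sub_C] at h
    exact Nat.lt_succ_iff.1 h
  obtain ⟨b, a, hrem⟩ := Polynomial.exists_eq_X_add_C_of_natDegree_le_one hdeg
  refine ⟨a, a.2, b, b.2, ?_⟩
  change Polynomial.aeval α P = _
  rw [← Polynomial.aeval_modByMonic_eq_self_of_root hroot, hrem]
  simp [add_comm]

lemma eq_zero_or_eq_zero_of_sq_add_mul_mem [NeZero (2 : L)] (hα : α ∉ K) (hα2 : α ^ 2 ∈ K)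
    {a b : L} (ha : a ∈ K) (hb : b ∈ K) (h : (a + b * α) ^ 2 ∈ K) : a = 0 ∨ b = 0 := by
  by_contra! hne
  refine hα ?_
  have heq : α = ((a + b * α) ^ 2 - a ^ 2 - b ^ 2 * α ^ 2) / (2 * a * b) := by
    rw [eq_div_iff (mul_ne_zero (mul_ne_zero two_ne_zero hne.1) hne.2)]
    ring
  rw [heq]
  exact div_mem (sub_mem (sub_mem h (pow_mem ha 2)) (mul_mem (pow_mem hb 2) hα2))
    (mul_mem (mul_mem (ofNat_mem K 2) ha) hb)

end QuadraticExtension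

variable {ι : Type*} {p : ι → ℕ}

/-- The field generated over `ℚ` by the numbers `√(p i)`, for `i ∈ s`. -/
noncomputable def sqrtField (p : ι → ℕ) (s : Finset ι) : IntermediateField ℚ ℝ :=
  adjoin ℚ ((fun i => √(p i : ℝ)) '' s)

lemma sqrt_mem_sqrtField {s : Finset ι} {i : ι} (hi : i ∈ s) : √(p i : ℝ) ∈ sqrtField p s :=
  subset_adjoin _ _ ⟨i, hi, rfl⟩

lemma sum_mul_sqrt_mem_sqrtField (s : Finset ι) (c : ι → ℚ) :
    ∑ i ∈ s, (c i : ℝ) * √(p i : ℝ) ∈ sqrtField p s :=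
  sum_mem fun i hi => mul_mem ((sqrtField p s).algebraMap_mem (c i)) (sqrt_mem_sqrtField hi)

lemma exists_eq_add_mul_sqrt_of_mem_sqrtField_insert [DecidableEq ι] {s : Finset ι} {i : ι} {x : ℝ}
    (hx : x ∈ sqrtField p (insert i s)) :
    ∃ a ∈ sqrtField p s, ∃ b ∈ sqrtField p s, x = a + b * √(p i : ℝ) := by
  refine exists_eq_add_mul_of_mem_adjoin_simple ?_ ?_
  · rw [Real.sq_sqrt (Nat.cast_nonneg _)]
    exact IntermediateField.natCast_mem _ _
  · rw [sqrtField, Finset.coe_insert, Set.image_insert_eq, Set.insert_eq, Set.union_comm,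
      ← adjoin_adjoin_left] at hx
    exact hx

variable (hp : ∀ i, (p i).Prime) (hinj : Function.Injective p)
include hp hinj

lemma not_isSquare_mul_prod {s : Finset ι} {i : ι} (hi : i ∉ s) :
    ¬ IsSquare (p i * ∏ j ∈ s, p j) := by
  rintro ⟨k, hk⟩
  obtain ⟨m, rfl⟩ : p i ∣ k := or_self_iff.1 ((hp i).dvd_mul.1 ⟨_, hk.symm⟩)
  have hdvd : p i ∣ ∏ j ∈ s, p j :=
    ⟨m * m, Nat.eq_of_mul_eq_mul_left (hp i).pos (by rw [hk]; ring)⟩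
  obtain ⟨j, hj, hij⟩ := ((hp i).prime.dvd_finsetProd_iff _).1 hdvd
  exact hi (hinj ((Nat.prime_dvd_prime_iff_eq (hp i) (hp j)).1 hij) ▸ hj)

lemma exists_isSquare_mul_prod_of_sqrt_mem (s : Finset ι) {d : ℕ}
    (hd : √(d : ℝ) ∈ sqrtField p s) : ∃ t ⊆ s, IsSquare (d * ∏ i ∈ t, p i) := by
  classical
  induction s using Finset.induction_on generalizing d with
  | empty =>
    refine ⟨∅, le_rfl, ?_⟩
    rw [sqrtField, Finset.coe_empty, Set.image_empty, adjoin_empty, mem_bot] at hd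
    by_contra h
    rw [Finset.prod_empty, mul_one] at h
    exact irrational_sqrt_natCast_iff.2 h hd
  | insert i s hi ih =>
    have hsq : √(p i : ℝ) ^ 2 = p i := Real.sq_sqrt (Nat.cast_nonneg _)
    have hsq_mem : √(p i : ℝ) ^ 2 ∈ sqrtField p s := by
      rw [hsq]
      exact IntermediateField.natCast_mem _ _
    have hnot : √(p i : ℝ) ∉ sqrtField p s := fun h => by
      obtain ⟨t, hts, ht⟩ := ih h
      exact not_isSquare_mul_prod hp hinj (fun h => hi (hts h)) ht
    obtain ⟨a, ha, b, hb, hab⟩ := exists_eq_add_mul_sqrt_of_mem_sqrtField_insert hd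
    have hd_sq : (a + b * √(p i : ℝ)) ^ 2 ∈ sqrtField p s := by
      rw [← hab, Real.sq_sqrt (Nat.cast_nonneg _)]
      exact IntermediateField.natCast_mem _ _
    rcases eq_zero_or_eq_zero_of_sq_add_mul_mem hnot hsq_mem ha hb hd_sq with rfl | rfl
    · have hmem : √((d * p i : ℕ) : ℝ) ∈ sqrtField p s := by
        rw [Nat.cast_mul, Real.sqrt_mul (Nat.cast_nonneg d), hab, zero_add, mul_assoc, ← sq, hsq]
        exact mul_mem hb (IntermediateField.natCast_mem _ _)
      obtain ⟨t, hts, ht⟩ := ih hmem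
      refine ⟨insert i t, Finset.insert_subset_insert _ hts, ?_⟩
      rwa [Finset.prod_insert fun h => hi (hts h), ← mul_assoc]
    · obtain ⟨t, hts, ht⟩ := ih (d := d) (by rwa [hab, zero_mul, add_zero])
      exact ⟨t, hts.trans (Finset.subset_insert _ _), ht⟩

lemma sqrt_notMem_sqrtField {s : Finset ι} {i : ι} (hi : i ∉ s) : √(p i : ℝ) ∉ sqrtField p s := by
  intro h
  obtain ⟨t, hts, ht⟩ := exists_isSquare_mul_prod_of_sqrt_mem hp hinj s h
  exact not_isSquare_mul_prod hp hinj (fun h => hi (hts h)) ht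

lemma linearIndependent_sqrt : LinearIndependent ℚ fun i => √(p i : ℝ) := by
  classical
  rw [linearIndependent_iff']
  intro s c hc i hi
  by_contra hne
  refine sqrt_notMem_sqrtField hp hinj (Finset.notMem_erase i s) ?_
  have hci : (c i : ℝ) ≠ 0 := Rat.cast_ne_zero.2 hne
  simp only [Rat.smul_def, ← Finset.add_sum_erase _ _ hi] at hc
  rw [eq_div_of_mul_eq hci ((mul_comm _ _).trans (eq_neg_of_add_eq_zero_left hc))]
  exact div_mem (neg_mem (sum_mul_sqrt_mem_sqrtField _ _)) ((sqrtField p _).algebraMap_mem (c i))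

lemma eq_zero_of_sum_mul_sqrt_sq_eq [Fintype ι] {c : ι → ℚ} {r : ℚ}
    (h : (∑ i, (c i : ℝ) * √(p i : ℝ)) ^ 2 = r) {i j : ι} (hi : c i ≠ 0) (hij : j ≠ i) :
    c j = 0 := by
  classical
  let s : Finset ι := Finset.univ.erase i
  have hrest : ∑ j ∈ s, (c j : ℝ) * √(p j : ℝ) = 0 := by
    have hsq : (∑ j ∈ s, (c j : ℝ) * √(p j : ℝ) + c i * √(p i : ℝ)) ^ 2 ∈ sqrtField p s := by
      rw [Finset.sum_erase_add _ _ (Finset.mem_univ i), h]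
      exact (sqrtField p s).algebraMap_mem r
    refine (eq_zero_or_eq_zero_of_sq_add_mul_mem
      (sqrt_notMem_sqrtField hp hinj (Finset.notMem_erase i _)) ?_ (sum_mul_sqrt_mem_sqrtField s c)
      ((sqrtField p s).algebraMap_mem (c i)) hsq).resolve_right (Rat.cast_ne_zero.2 hi)
    rw [Real.sq_sqrt (Nat.cast_nonneg _)]
    exact IntermediateField.natCast_mem _ _
  refine linearIndependent_iff'.1 (linearIndependent_sqrt hp hinj) s c ?_ j (by simpa [s] using hij)
  simpa only [Rat.smul_def] using hrest

end SquareRootsOfPrimes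

section PrimesInResidueClass

open ArithmeticFunction ArithmeticFunction.vonMangoldt Filter Topology

lemma sub_one_mul_log_div_rpow_le {x y : ℝ} (hx : 1 < x) (hy : 0 < y) :
    (x - 1) * (log y / y ^ x) ≤ 1 / y := by
  have hlog : (x - 1) * log y ≤ y ^ (x - 1) := by
    rw [mul_comm, ← le_div_iff₀ (sub_pos.2 hx)]
    exact log_le_rpow_div hy.le (sub_pos.2 hx)
  calc (x - 1) * (log y / y ^ x) = (x - 1) * log y / y ^ x := (mul_div_assoc _ _ _).symm
    _ ≤ y ^ (x - 1) / y ^ x := by gcongr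
    _ = 1 / y := by rw [← rpow_sub hy, sub_sub_cancel_left, rpow_neg_one, one_div]

variable {q : ℕ} (a : ZMod q)

lemma sub_one_mul_residueClass_div_rpow_le {x : ℝ} (hx : x ∈ Set.Ioc 1 2) (n : ℕ) :
    (x - 1) * (residueClass a n / (n : ℝ) ^ x) ≤
      (if n.Prime ∧ (n : ZMod q) = a then 1 / (n : ℝ) else 0) +
        (if n.Prime then 0 else residueClass a n) / n := by
  by_cases hn : n.Prime
  · by_cases hna : (n : ZMod q) = a
    · have hΛ : residueClass a n = Real.log n := by
        simp [residueClass, hna, vonMangoldt_apply_prime hn]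
      rw [hΛ]
      simpa [hn, hna] using sub_one_mul_log_div_rpow_le hx.1 (Nat.cast_pos.2 hn.pos)
    · simp [residueClass, hna]
  · rcases n.eq_zero_or_pos with rfl | hpos
    · simp
    have hone : (1 : ℝ) ≤ n := Nat.one_le_cast.2 hpos
    have hpow : (n : ℝ) ≤ (n : ℝ) ^ x := by
      simpa using rpow_le_rpow_of_exponent_le hone hx.1.le
    have hdiv : residueClass a n / (n : ℝ) ^ x ≤ residueClass a n / n :=
      div_le_div_of_nonneg_left (residueClass_nonneg a n) (by positivity) hpow
    have hnonneg : 0 ≤ residueClass a n / (n : ℝ) ^ x := by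
      have := residueClass_nonneg a n
      positivity
    simp only [hn, false_and, if_false, zero_add]
    exact (mul_le_of_le_one_left hnonneg (by linarith [hx.2])).trans hdiv

lemma tendsto_sub_one_mul_residueClass_div_rpow (n : ℕ) :
    Tendsto (fun x : ℝ => (x - 1) * (residueClass a n / (n : ℝ) ^ x)) (𝓝[>] 1) (𝓝 0) := by
  rcases eq_or_ne n 0 with rfl | hn
  · simp
  have hn' : (n : ℝ) ≠ 0 := Nat.cast_ne_zero.2 hn
  have hcont : ContinuousAt (fun x : ℝ => (x - 1) * (residueClass a n / (n : ℝ) ^ x)) 1 :=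
    (by fun_prop : ContinuousAt (fun x : ℝ => x - 1) 1).mul
      (continuousAt_const.div (continuousAt_const_rpow hn') (by simpa using hn'))
  simpa using hcont.tendsto.mono_left nhdsWithin_le_nhds

variable [NeZero q] {a}

theorem not_summable_one_div_prime_residueClass (ha : IsUnit a) :
    ¬ Summable fun n : ℕ => if n.Prime ∧ (n : ZMod q) = a then 1 / (n : ℝ) else 0 := by
  intro hsum
  obtain ⟨C, hC⟩ := LSeries_residueClass_lower_bound ha
  have hnear : ∀ᶠ x : ℝ in 𝓝[>] 1, x ∈ Set.Ioc 1 2 := Ioc_mem_nhdsGT one_lt_two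
  have hupper : Tendsto (fun x : ℝ => ∑' n : ℕ, (x - 1) * (residueClass a n / (n : ℝ) ^ x))
      (𝓝[>] 1) (𝓝 (∑' _ : ℕ, 0)) := by
    refine tendsto_tsum_of_dominated_convergence
      (hsum.add (summable_residueClass_non_primes_div a))
      (tendsto_sub_one_mul_residueClass_div_rpow a) ?_
    filter_upwards [hnear] with x hx n
    rw [Real.norm_of_nonneg (mul_nonneg (sub_pos.2 hx.1).le
      (div_nonneg (residueClass_nonneg a n) (by positivity)))]
    exact sub_one_mul_residueClass_div_rpow_le a hx n
  have hlower : Tendsto (fun x : ℝ => (q.totient : ℝ)⁻¹ - C * (x - 1)) (𝓝[>] 1)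
      (𝓝 (q.totient : ℝ)⁻¹) :=
    ((by fun_prop : Continuous fun x : ℝ => (q.totient : ℝ)⁻¹ - C * (x - 1)).tendsto' 1 _
      (by simp)).mono_left nhdsWithin_le_nhds
  have hle : (q.totient : ℝ)⁻¹ ≤ 0 := by
    rw [tsum_zero] at hupper
    refine le_of_tendsto_of_tendsto hlower hupper ?_
    filter_upwards [hnear] with x hx
    have hx0 : 0 < x - 1 := sub_pos.2 hx.1
    rw [tsum_mul_left]
    calc (q.totient : ℝ)⁻¹ - C * (x - 1) = (x - 1) * ((q.totient : ℝ)⁻¹ / (x - 1) - C) := by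
          field_simp
      _ ≤ _ := by
          gcongr
          exact hC hx
  have : 0 < q.totient := Nat.totient_pos.2 (NeZero.pos q)
  exact hle.not_gt (by positivity)

end PrimesInResidueClass

section PrimesBound

lemma hasLaplace_affine (A D : ℝ) :
    HasLaplace (fun t => A * t + D) (fun s => A / s ^ 2 + D / s) := by
  simpa [Pi.add_def, div_eq_mul_inv] using
    ((HasLaplace.pow 1).const_mul A).add ((HasLaplace.pow 0).const_mul D)

lemma termMass_le_mul_inv_sq (μ : ℝ) (q : ℕ) :
    termMass μ q ≤ μ ^ 2 / (16 * π ^ 3) * ((q : ℝ) ^ 2)⁻¹ := by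
  rw [termMass]
  split_ifs with h
  · rw [h]
    refine le_of_eq ?_
    field_simp
    norm_num
  · positivity

lemma summable_termMass (μ : ℝ) :
    Summable fun v : {v : ℤ × ℤ // v ≠ 0} => termMass μ (sqNorm v) :=
  (summable_inv_sqNorm_sq_ne_zero.mul_left _).of_nonneg_of_le (fun _ => termMass_nonneg _ _)
    fun _ => termMass_le_mul_inv_sq _ _

lemma dualMass_nonneg (μ : ℝ) : 0 ≤ dualMass μ := tsum_nonneg fun _ => termMass_nonneg _ _

lemma exists_sq_eq_of_dualMass_ne_zero {μ : ℝ} (h : dualMass μ ≠ 0) :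
    ∃ q : ℕ, 0 < q ∧ μ ^ 2 = 4 * π ^ 2 * q := by
  obtain ⟨v, hv⟩ : ∃ v : {v : ℤ × ℤ // v ≠ 0}, termMass μ (sqNorm v) ≠ 0 := by
    by_contra! hzero
    exact h (by simp [dualMass, hzero])
  exact ⟨sqNorm v, sqNorm_pos v, (ite_ne_right_iff.1 hv).1⟩

lemma one_div_le_dualMass {n : ℕ} (hn : n.Prime) (hmod : (n : ZMod 4) = 1) :
    1 / (4 * π * n) ≤ dualMass (2 * π * √n) := by
  have hmod' : n % 4 = 1 := (ZMod.natCast_eq_natCast_iff' n 1 4).1 (by simpa using hmod)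
  have := Fact.mk hn
  obtain ⟨a, b, hab⟩ := Nat.Prime.sq_add_sq (p := n) (by lia)
  have hsq : sqNorm (a, b) = n := by simpa [sqNorm] using hab
  have hne : ((a, b) : ℤ × ℤ) ≠ 0 := sqNorm_eq_zero.not.1 (hsq ▸ hn.ne_zero)
  calc 1 / (4 * π * n) = termMass (2 * π * √n) (sqNorm (a, b)) := by
        rw [hsq, termMass, if_pos (sq_two_pi_mul_sqrt n)]
    _ ≤ dualMass (2 * π * √n) :=
        (summable_termMass _).le_tsum ⟨_, hne⟩ fun _ _ => termMass_nonneg _ _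

lemma ratCast_signType_eq_zero {e : SignType} : (e : ℚ) = 0 ↔ e = 0 :=
  map_eq_zero SignType.castHom

variable {ι : Type*} [Fintype ι]

lemma rieszWeight_zero : rieszWeight (0 : ι → SignType) = 1 := by
  simp [rieszWeight]

lemma rieszWeight_of_forall_ne_eq_zero {x : ι → SignType} {i : ι} (hi : x i ≠ 0)
    (h : ∀ j ≠ i, x j = 0) : rieszWeight x = -(1 / 2) := by
  rw [rieszWeight, Fintype.prod_eq_single i fun j hj => if_pos (h j hj), if_neg hi]

lemma rieszFreq_single [DecidableEq ι] (a : ι → ℝ) (i : ι) :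
    rieszFreq a (Pi.single i 1) = a i := by
  rw [rieszFreq, Fintype.sum_eq_single i fun j hj => by simp [hj]]
  simp

variable {p : ι → ℕ}

lemma rieszFreq_two_pi_mul_sqrt (x : ι → SignType) :
    rieszFreq (fun i => 2 * π * √(p i)) x =
      2 * π * ∑ i, (((x i : ℚ) : ℝ) * √(p i : ℝ)) := by
  have hcast (e : SignType) : ((e : ℚ) : ℝ) = e := SignType.map_cast (Rat.castHom ℝ) e
  simp only [rieszFreq, Finset.mul_sum, hcast]
  exact Finset.sum_congr rfl fun i _ => mul_left_comm _ _ _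

variable (hp : ∀ i, (p i).Prime) (hinj : Function.Injective p)
include hp hinj

lemma rieszFreq_sqrt_eq_zero_iff {x : ι → SignType} :
    rieszFreq (fun i => 2 * π * √(p i)) x = 0 ↔ x = 0 := by
  refine ⟨fun h => funext fun i => ?_, fun h => by simp [h, rieszFreq]⟩
  rw [rieszFreq_two_pi_mul_sqrt, mul_eq_zero_iff_left (by positivity)] at h
  exact ratCast_signType_eq_zero.1 <|
    Fintype.linearIndependent_iff.1 (linearIndependent_sqrt hp hinj) (fun i => (x i : ℚ))
      (by simpa only [Rat.smul_def] using h) i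

lemma rieszWeight_mul_dualMass_nonpos (x : ι → SignType) :
    rieszWeight x * dualMass (rieszFreq (fun i => 2 * π * √(p i)) x) ≤ 0 := by
  by_cases hmass : dualMass (rieszFreq (fun i => 2 * π * √(p i)) x) = 0
  · rw [hmass, mul_zero]
  obtain ⟨q, hq, hfreq⟩ := exists_sq_eq_of_dualMass_ne_zero hmass
  have hx : x ≠ 0 := by
    rintro rfl
    rw [(rieszFreq_sqrt_eq_zero_iff hp hinj).2 rfl] at hfreq
    have : 0 < 4 * π ^ 2 * q := by positivity
    simp [← hfreq] at this
  obtain ⟨i, hi⟩ := Function.ne_iff.1 hx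
  rw [rieszFreq_two_pi_mul_sqrt, mul_pow, show (2 * π) ^ 2 = 4 * π ^ 2 by ring] at hfreq
  have hsq := mul_left_cancel₀ (by positivity) hfreq
  have hweight := rieszWeight_of_forall_ne_eq_zero hi fun j hj => by
    exact ratCast_signType_eq_zero.1 <|
      eq_zero_of_sum_mul_sqrt_sq_eq hp hinj (c := fun i => (x i : ℚ)) (r := q)
        (by simpa using hsq) (ratCast_signType_eq_zero.not.2 hi) hj
  rw [hweight]
  exact mul_nonpos_of_nonpos_of_nonneg (by norm_num) (dualMass_nonneg _)

lemma sum_rieszWeight_mul_dualMass_le [DecidableEq ι] (hmod : ∀ i, (p i : ZMod 4) = 1) :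
    ∑ x, rieszWeight x * dualMass (rieszFreq (fun i => 2 * π * √(p i)) x) ≤
      -∑ i, 1 / (8 * π * p i) := by
  have hinj_single : Function.Injective fun i : ι => (Pi.single i 1 : ι → SignType) :=
    fun i j h => by simpa [Pi.single_apply] using congrFun h i
  calc ∑ x, rieszWeight x * dualMass (rieszFreq (fun i => 2 * π * √(p i)) x)
      ≤ ∑ x ∈ Finset.univ.map ⟨_, hinj_single⟩,
          rieszWeight x * dualMass (rieszFreq (fun i => 2 * π * √(p i)) x) :=
        Finset.sum_le_sum_of_subset_of_nonpos' (Finset.subset_univ _) fun x _ _ =>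
          rieszWeight_mul_dualMass_nonpos hp hinj x
    _ = -∑ i, 1 / 2 * dualMass (2 * π * √(p i)) := by
        rw [Finset.sum_map, ← Finset.sum_neg_distrib]
        refine Finset.sum_congr rfl fun i _ => ?_
        rw [Function.Embedding.coeFn_mk, rieszFreq_single,
          rieszWeight_of_forall_ne_eq_zero (i := i) (by simp) (by simp +contextual), neg_mul]
    _ ≤ -∑ i, 1 / (8 * π * p i) := by
        refine neg_le_neg (Finset.sum_le_sum fun i _ => ?_)
        calc 1 / (8 * π * p i) = 1 / 2 * (1 / (4 * π * p i)) := by ring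
          _ ≤ 1 / 2 * dualMass (2 * π * √(p i)) := by
            gcongr
            exact one_div_le_dualMass (hp i) (hmod i)

theorem sum_one_div_prime_le_of_latticeError_le (hmod : ∀ i, (p i : ZMod 4) = 1) {A D : ℝ}
    (h : ∀ t, 0 < t → latticeError t ≤ A * t + D) : ∑ i, 1 / (8 * π * p i) ≤ A := by
  classical
  have hriesz := ((hasLaplace_affine A D).sub hasLaplace_latticeError).sum_rieszWeight_mul_nonneg
    (fun t ht => sub_nonneg.2 (h t ht))
    (fun μ => (hasAmplitude_affine A D μ).sub (hasAmplitude_dualSum μ))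
    fun i => 2 * π * √(p i)
  have hconst : ∑ x : ι → SignType,
      rieszWeight x * (if rieszFreq (fun i => 2 * π * √(p i)) x = 0 then A else 0) = A := by
    simp [rieszFreq_sqrt_eq_zero_iff hp hinj, rieszWeight_zero]
  simp only [sub_neg_eq_add, mul_add, Finset.sum_add_distrib, hconst] at hriesz
  linarith [sum_rieszWeight_mul_dualMass_le hp hinj hmod]

end PrimesBound

theorem not_forall_latticeError_le (A D : ℝ) : ¬ ∀ t, 0 < t → latticeError t ≤ A * t + D := by
  intro h
  refine not_summable_one_div_prime_residueClass (isUnit_one (M := ZMod 4))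
    (summable_of_sum_le (c := 8 * π * A) (fun n => by positivity) fun u => ?_)
  have hmem (n : {n // n ∈ u.filter fun n : ℕ => n.Prime ∧ (n : ZMod 4) = 1}) :=
    (Finset.mem_filter.1 n.2).2
  have hsum := sum_one_div_prime_le_of_latticeError_le (fun n => (hmem n).1) Subtype.val_injective
    (fun n => (hmem n).2) h
  rw [Finset.sum_coe_sort _ fun n : ℕ => 1 / (8 * π * n)] at hsum
  rw [← Finset.sum_filter, ← div_le_iff₀' (by positivity), Finset.sum_div]
  simpa only [div_div, mul_comm (8 * π)] using hsum

lemma rpow_mul_Sx0_sub_eq {t : ℝ} (ht : 0 < t) :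
    (t ^ 4) ^ (-(1 : ℝ) / 2) * (Sx0 (t ^ 4) - 2 ^ ((3 : ℝ) / 2) * π / 3 * t ^ 4) =
      √2 / t * latticeError t := by
  have hsqrt : √(t ^ 4) = t ^ 2 := by
    rw [show t ^ 4 = (t ^ 2) ^ 2 by ring, sqrt_sq (sq_nonneg t)]
  have hroot : (t ^ 4) ^ ((1 : ℝ) / 4) = t := by
    rw [← rpow_natCast_mul ht.le]
    norm_num
  have hinv : (t ^ 4) ^ (-(1 : ℝ) / 2) = (t ^ 2)⁻¹ := by
    rw [neg_div, rpow_neg (by positivity), ← sqrt_eq_rpow, hsqrt]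
  have htwo : (2 : ℝ) ^ ((3 : ℝ) / 2) = 2 * √2 := by
    rw [show (3 : ℝ) / 2 = 1 + 1 / 2 by norm_num, rpow_add two_pos, rpow_one, ← sqrt_eq_rpow]
  rw [Sx0, latticeError, latticeSum, hsqrt, hroot, hinv, htwo]
  simp only [← sqrt_eq_rpow]
  field_simp

lemma exists_forall_latticeError_le {C X : ℝ} (h : ∀ x, X < x →
      x ^ (-(1 : ℝ) / 2) * (Sx0 x - 2 ^ ((3 : ℝ) / 2) * π / 3 * x) ≤ C) :
    ∃ A D : ℝ, ∀ t, 0 < t → latticeError t ≤ A * t + D := by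
  refine ⟨|C|, latticeSum (max 1 X), fun t ht => ?_⟩
  rcases le_or_gt t (max 1 X) with htX | htX
  · have hmono := latticeSum_le_latticeSum ht.le htX
    have hvolume : 0 ≤ 2 * π / 3 * t ^ 3 := by positivity
    rw [latticeError]
    linarith [mul_nonneg (abs_nonneg C) ht.le]
  · obtain ⟨htone, htX⟩ := max_lt_iff.1 htX
    have hbound := h (t ^ 4) (htX.trans_le (le_self_pow₀ htone.le four_ne_zero))
    rw [rpow_mul_Sx0_sub_eq ht, div_mul_eq_mul_div, div_le_iff₀ ht] at hbound
    have hsqrt : 1 ≤ √2 := one_le_sqrt.2 one_le_two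
    calc latticeError t ≤ |C| * t := by
          nlinarith [le_abs_self C, mul_nonneg (abs_nonneg C) ht.le]
      _ ≤ |C| * t + latticeSum (max 1 X) := le_add_of_nonneg_right (latticeSum_nonneg _)

/-- `limsup_{x→∞} x^{−1/2}·(S(√x; 0) − (2^{3/2}π/3)·x) = +∞`. -/
theorem limsup_Q_eq_top :
    ∀ C : ℝ, ∀ X : ℝ, ∃ x : ℝ, X < x ∧
      C < x ^ (-(1 : ℝ) / 2) * (Sx0 x - 2 ^ ((3 : ℝ) / 2) * Real.pi / 3 * x) := by
  intro C X
  by_contra! hbounded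
  obtain ⟨A, D, h⟩ := exists_forall_latticeError_le hbounded
  exact not_forall_latticeError_le A D h
end

section
/- With S(√x; 0) = √2·x^{1/4}·Σ_{m ∈ ℕ, m ≤ √x} r₂(m)·(√x − m)^{1/2} and c₀ = 2^{3/2}π/3, one has liminf_{x→∞} x^{−1/2}·(S(√x; 0) − c₀·x) = −∞. -/
open Real

/-!
Put `u = x ^ (1 / 4)`: the sum in `Sx0 x` runs over the integer points of the disc of radius `u` and
adds up the heights of the hemisphere `p ↦ √(u ^ 2 - ‖p‖ ^ 2)` above them. Its Fourier transform is
explicit, so Poisson summation turns the sum, minus the volume `2π/3 * u ^ 3` and divided by `u`,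
into the series of `-cos (2π‖n‖u) / (2π‖n‖ ^ 2)` over `n ≠ 0`, up to a bounded error. The weights
`‖n‖⁻²` are not summable over the lattice. Averaging over `u` against a normalised tent of
half-width `δ` makes them so, but their total then tends to infinity as `δ → 0`. For fixed `δ`
almost periodicity gives arbitrarily large `u` at which the averaged series is close to minus that
total.
-/

open MeasureTheory Filter Topology HurwitzZeta
open scoped InnerProductSpace

section LatticeTheta

/-- The point of the lattice `ℤ² ⊆ ℂ` with integer coordinates `n`; the plane is modelled by `ℂ` for
the sake of its rotations. -/
def latticePoint (n : ℤ × ℤ) : ℂ :=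
  ⟨n.1, n.2⟩

@[simp]
lemma latticePoint_zero : latticePoint 0 = 0 :=
  Complex.ext (by simp [latticePoint]) (by simp [latticePoint])

lemma norm_latticePoint_sub_sq (n : ℤ × ℤ) (p : ℂ) :
    ‖latticePoint n - p‖ ^ 2 = (n.1 - p.re) ^ 2 + (n.2 - p.im) ^ 2 := by
  simp only [Complex.sq_norm, Complex.normSq_apply, latticePoint, Complex.sub_re, Complex.sub_im]
  ring

lemma norm_latticePoint_sq (n : ℤ × ℤ) : ‖latticePoint n‖ ^ 2 = (n.1 : ℝ) ^ 2 + (n.2 : ℝ) ^ 2 := by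
  simpa using norm_latticePoint_sub_sq n 0

lemma inner_latticePoint (n : ℤ × ℤ) (p : ℂ) : ⟪latticePoint n, p⟫_ℝ = n.1 * p.re + n.2 * p.im := by
  simp [Complex.inner, latticePoint, mul_comm]

lemma one_le_norm_latticePoint {n : ℤ × ℤ} (hn : n ≠ 0) : 1 ≤ ‖latticePoint n‖ := by
  have hn' : n.1 ≠ 0 ∨ n.2 ≠ 0 := not_and_or.1 fun h ↦ hn (Prod.ext h.1 h.2)
  rcases hn' with h | h
  · calc (1 : ℝ) ≤ |(n.1 : ℝ)| := mod_cast Int.one_le_abs h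
      _ ≤ ‖latticePoint n‖ := Complex.abs_re_le_norm (latticePoint n)
  · calc (1 : ℝ) ≤ |(n.2 : ℝ)| := mod_cast Int.one_le_abs h
      _ ≤ ‖latticePoint n‖ := Complex.abs_im_le_norm (latticePoint n)

lemma hasSum_exp_norm_latticePoint_sub_sq (p : ℂ) {s : ℝ} (hs : 0 < s) :
    HasSum (fun n : ℤ × ℤ ↦ exp (-π * s * ‖latticePoint n - p‖ ^ 2))
      (evenKernel ↑(-p.re) s * evenKernel ↑(-p.im) s) := by
  have hre := hasSum_int_evenKernel (-p.re) hs
  have him := hasSum_int_evenKernel (-p.im) hs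
  refine (hre.mul him (hre.summable.mul_of_nonneg him.summable
    (fun _ ↦ (exp_pos _).le) fun _ ↦ (exp_pos _).le)).congr_fun fun n ↦ ?_
  rw [norm_latticePoint_sub_sq, ← exp_add]
  ring_nf

lemma hasSum_exp_norm_latticePoint_sq_mul_cos (p : ℂ) {t : ℝ} (ht : 0 < t) :
    HasSum (fun n : ℤ × ℤ ↦ exp (-π * t * ‖latticePoint n‖ ^ 2) *
      cos (2 * π * ⟪latticePoint n, p⟫_ℝ)) (cosKernel p.re t * cosKernel p.im t) := by
  have hre := hasSum_int_cosKernel p.re ht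
  have him := hasSum_int_cosKernel p.im ht
  have hre_norm := hre.summable.norm
  have him_norm := him.summable.norm
  have hprod := summable_mul_of_summable_norm hre_norm him_norm
  have h := hre.mul him hprod
  rw [← Complex.ofReal_mul] at h
  rw [← Complex.ofReal_re (cosKernel p.re t * cosKernel p.im t)]
  refine (Complex.hasSum_re h).congr_fun fun n ↦ ?_
  have hexp : Complex.exp (2 * π * Complex.I * p.re * n.1) * (exp (-π * n.1 ^ 2 * t) : ℝ) *
      (Complex.exp (2 * π * Complex.I * p.im * n.2) * (exp (-π * n.2 ^ 2 * t) : ℝ)) =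
      (exp (-π * t * ‖latticePoint n‖ ^ 2) : ℝ) *
        Complex.exp ((2 * π * ⟪latticePoint n, p⟫_ℝ : ℝ) * Complex.I) := by
    rw [norm_latticePoint_sq, inner_latticePoint]
    push_cast
    simp only [← Complex.exp_add]
    ring_nf
  rw [hexp, Complex.re_ofReal_mul, Complex.exp_ofReal_mul_I_re]

lemma summable_exp_norm_latticePoint_sq {t : ℝ} (ht : 0 < t) :
    Summable fun n : ℤ × ℤ ↦ exp (-π * t * ‖latticePoint n‖ ^ 2) := by
  simpa using (hasSum_exp_norm_latticePoint_sub_sq 0 ht).summable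

/-- The heat kernel of the torus `ℝ² / ℤ²` at time `1 / (4πs)`, given by its Fourier series. -/
noncomputable def latticeTheta (s : ℝ) (p : ℂ) : ℝ :=
  ∑' n : ℤ × ℤ, exp (-π * s⁻¹ * ‖latticePoint n‖ ^ 2) * cos (2 * π * ⟪latticePoint n, p⟫_ℝ)

lemma hasSum_latticeTheta (p : ℂ) {s : ℝ} (hs : 0 < s) :
    HasSum (fun v : ℤ × ℤ ↦ s * exp (-π * s * ‖latticePoint v - p‖ ^ 2)) (latticeTheta s p) := by
  have hval : latticeTheta s p = s * (evenKernel ↑(-p.re) s * evenKernel ↑(-p.im) s) := by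
    rw [latticeTheta, (hasSum_exp_norm_latticePoint_sq_mul_cos p (inv_pos.2 hs)).tsum_eq,
      evenKernel_functional_equation, evenKernel_functional_equation, ← sqrt_eq_rpow, one_div s]
    simp only [AddCircle.coe_neg, cosKernel_neg]
    field_simp
    rw [sq_sqrt hs.le]
    ring
  exact hval ▸ (hasSum_exp_norm_latticePoint_sub_sq p hs).mul_left s

lemma norm_exp_mul_cos_le (x y : ℝ) : ‖exp x * cos y‖ ≤ exp x := by
  rw [norm_mul, norm_of_nonneg (exp_pos x).le]
  exact mul_le_of_le_one_right (exp_pos x).le (abs_cos_le_one y)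

lemma continuous_latticeTheta {s : ℝ} (hs : 0 < s) : Continuous (latticeTheta s) :=
  continuous_tsum (fun n ↦ by fun_prop) (summable_exp_norm_latticePoint_sq (inv_pos.2 hs))
    fun _ _ ↦ norm_exp_mul_cos_le _ _

lemma norm_latticeTheta_le (p : ℂ) {s : ℝ} (hs : 0 < s) :
    ‖latticeTheta s p‖ ≤ ∑' n : ℤ × ℤ, exp (-π * s⁻¹ * ‖latticePoint n‖ ^ 2) :=
  tsum_of_norm_bounded (summable_exp_norm_latticePoint_sq (inv_pos.2 hs)).hasSum
    fun _ ↦ norm_exp_mul_cos_le _ _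

end LatticeTheta

section CosTransform

variable {E : Type*} [NormedAddCommGroup E] [InnerProductSpace ℝ E] [FiniteDimensional ℝ E]
  [MeasurableSpace E] [BorelSpace E]

/-- The cosine transform of a real function, that is, the real part of its Fourier transform `𝓕`. -/
noncomputable def cosTransform (h : E → ℝ) (ξ : E) : ℝ :=
  ∫ p, h p * cos (2 * π * ⟪ξ, p⟫_ℝ)

lemma integrable_mul_cos_inner {h : E → ℝ} (hi : Integrable h) (ξ : E) :
    Integrable fun p ↦ h p * cos (2 * π * ⟪ξ, p⟫_ℝ) :=
  hi.mul_bdd (c := 1) (by fun_prop) (ae_of_all _ fun _ ↦ abs_cos_le_one _)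

lemma cosTransform_comp_linearIsometryEquiv (h : E → ℝ) (L : E ≃ₗᵢ[ℝ] E) (ξ : E) :
    cosTransform (h ∘ L) ξ = cosTransform h (L ξ) := by
  simpa only [cosTransform, Function.comp, L.inner_map_map] using
    L.measurePreserving.integral_comp L.toHomeomorph.measurableEmbedding
      fun p ↦ h p * cos (2 * π * ⟪L ξ, p⟫_ℝ)

lemma cosTransform_integral {α : Type*} [MeasurableSpace α] {μ : Measure α} [SFinite μ]
    {g : E → α → ℝ} (hg : Integrable (Function.uncurry g) (volume.prod μ)) (ξ : E) :
    cosTransform (fun p ↦ ∫ u, g p u ∂μ) ξ = ∫ u, cosTransform (g · u) ξ ∂μ := by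
  simp only [cosTransform, ← integral_mul_const]
  refine integral_integral_swap ?_
  exact hg.mul_bdd (c := 1) (by fun_prop) (ae_of_all _ fun _ ↦ abs_cos_le_one _)

end CosTransform

section Poisson

variable {h : ℂ → ℝ}

lemma hasSum_exp_mul_cosTransform (hi : Integrable h) {s : ℝ} (hs : 0 < s) :
    HasSum (fun n : ℤ × ℤ ↦ exp (-π * s⁻¹ * ‖latticePoint n‖ ^ 2) * cosTransform h (latticePoint n))
      (∫ p, latticeTheta s p * h p) := by
  have hsum := summable_exp_norm_latticePoint_sq (inv_pos.2 hs)
  let F (n : ℤ × ℤ) (p : ℂ) : ℝ := exp (-π * s⁻¹ * ‖latticePoint n‖ ^ 2) *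
    (h p * cos (2 * π * ⟪latticePoint n, p⟫_ℝ))
  have hF (n) : Integrable (F n) := (integrable_mul_cos_inner hi _).const_mul _
  have hnorm : Summable fun n ↦ ∫ p, ‖F n p‖ := by
    refine (hsum.mul_right (∫ p, ‖h p‖)).of_nonneg_of_le
      (fun n ↦ integral_nonneg fun _ ↦ norm_nonneg _) fun n ↦ ?_
    rw [← integral_const_mul]
    refine integral_mono (hF n).norm (hi.norm.const_mul _) fun p ↦ ?_
    rw [norm_mul, norm_mul, norm_of_nonneg (exp_pos _).le]
    gcongr
    exact mul_le_of_le_one_right (norm_nonneg _) (abs_cos_le_one _)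
  have htsum (p : ℂ) : ∑' n, F n p = latticeTheta s p * h p := by
    rw [latticeTheta, ← tsum_mul_right]
    exact tsum_congr fun n ↦ by ring
  simpa only [F, integral_const_mul, htsum] using!
    hasSum_integral_of_summable_integral_norm hF hnorm

lemma sum_integral_gaussian_mul_le (hi : Integrable h) (h0 : ∀ p, 0 ≤ h p) (B : Finset (ℤ × ℤ))
    {s : ℝ} (hs : 0 < s) :
    ∑ v ∈ B, ∫ p, s * exp (-π * s * ‖latticePoint v - p‖ ^ 2) * h p ≤
      ∑' n : ℤ × ℤ,
        exp (-π * s⁻¹ * ‖latticePoint n‖ ^ 2) * cosTransform h (latticePoint n) := by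
  have hgauss (v : ℤ × ℤ) (_ : v ∈ B) :
      Integrable fun p ↦ s * exp (-π * s * ‖latticePoint v - p‖ ^ 2) * h p := by
    refine hi.bdd_mul (c := s) (by fun_prop) (ae_of_all _ fun p ↦ ?_)
    rw [norm_of_nonneg (by positivity)]
    refine mul_le_of_le_one_right hs.le (exp_le_one_iff.2 ?_)
    simpa only [neg_mul, neg_nonpos] using (by positivity : 0 ≤ π * s * ‖latticePoint v - p‖ ^ 2)
  rw [(hasSum_exp_mul_cosTransform hi hs).tsum_eq, ← integral_finsetSum B hgauss]
  refine integral_mono (integrable_finsetSum B hgauss)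
    (hi.bdd_mul (continuous_latticeTheta hs).aestronglyMeasurable
      (ae_of_all _ fun p ↦ norm_latticeTheta_le p hs)) fun p ↦ ?_
  simp only [← Finset.sum_mul]
  gcongr
  · exact h0 p
  · exact sum_le_hasSum B (fun v _ ↦ by positivity) (hasSum_latticeTheta p hs)

lemma tendsto_integral_gaussian_mul (hi : Integrable h) {v : ℂ} (hc : ContinuousAt h v) :
    Tendsto (fun s : ℝ ↦ ∫ p, s * exp (-π * s * ‖v - p‖ ^ 2) * h p) atTop (𝓝 (h v)) := by
  have hlim := (tendsto_integral_gaussian_smul' (f := fun p ↦ (h p : ℂ)) hi.ofReal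
    (Complex.continuous_ofReal.continuousAt.comp hc)).comp (tendsto_id.atTop_div_const pi_pos)
  rw [← Complex.ofReal_re (h v)]
  refine ((Complex.continuous_re.tendsto _).comp hlim).congr fun s ↦ ?_
  rw [← Complex.ofReal_re (∫ p, _), ← integral_complex_ofReal]
  simp only [Function.comp, id, Complex.finrank_real_complex]
  congr! 3 with p
  have hs : (π : ℂ) * ((s / π : ℝ) : ℂ) = s := by push_cast; field_simp
  have hexp : -π ^ 2 * ((s / π : ℝ) : ℂ) * ‖v - p‖ ^ 2 = -π * s * ‖v - p‖ ^ 2 := by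
    linear_combination -π * ‖v - p‖ ^ 2 * hs
  rw [hs, hexp]
  push_cast
  norm_num

/-- One half of the Poisson summation formula, which for nonnegative `h` needs no decay of `h`
beyond integrability: only the Gaussian regularisations of both sides have to be compared. -/
theorem sum_latticePoint_le_tsum_cosTransform (hi : Integrable h) (hc : Continuous h)
    (h0 : ∀ p, 0 ≤ h p) (hs : Summable fun n ↦ cosTransform h (latticePoint n))
    (B : Finset (ℤ × ℤ)) :
    ∑ v ∈ B, h (latticePoint v) ≤ ∑' n, cosTransform h (latticePoint n) := by
  have hright : Tendsto (fun s : ℝ ↦ ∑' n : ℤ × ℤ,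
      exp (-π * s⁻¹ * ‖latticePoint n‖ ^ 2) * cosTransform h (latticePoint n))
      atTop (𝓝 (∑' n, cosTransform h (latticePoint n))) := by
    refine tendsto_tsum_of_dominated_convergence hs.norm (fun n ↦ ?_) ?_
    · have hexp : Tendsto (fun s : ℝ ↦ exp (-π * s⁻¹ * ‖latticePoint n‖ ^ 2)) atTop
          (𝓝 (exp (-π * 0 * ‖latticePoint n‖ ^ 2))) :=
        (continuous_exp.tendsto _).comp ((tendsto_inv_atTop_zero.const_mul _).mul_const _)
      simpa using hexp.mul_const (cosTransform h (latticePoint n))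
    · filter_upwards [eventually_gt_atTop 0] with s hs n
      rw [norm_mul, norm_of_nonneg (exp_pos _).le]
      refine mul_le_of_le_one_left (norm_nonneg _) (exp_le_one_iff.2 ?_)
      simpa only [neg_mul, neg_nonpos] using
        (by positivity : 0 ≤ π * s⁻¹ * ‖latticePoint n‖ ^ 2)
  refine le_of_tendsto_of_tendsto (tendsto_finsetSum B fun v _ ↦
    tendsto_integral_gaussian_mul hi hc.continuousAt) hright ?_
  filter_upwards [eventually_gt_atTop 0] with s hs
  exact sum_integral_gaussian_mul_le hi h0 B hs

end Poisson

section Hemisphere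

lemma integral_sqrt_sub_sq (c : ℝ) : ∫ y, √(c - y ^ 2) = π / 2 * max c 0 := by
  rcases le_or_gt c 0 with hc | hc
  · have hzero (y : ℝ) : √(c - y ^ 2) = 0 :=
      sqrt_eq_zero_of_nonpos (by nlinarith only [hc, sq_nonneg y])
    simp [max_eq_right hc, hzero]
  have hunit : ∫ y : ℝ, √(1 - y ^ 2) = π / 2 := by
    rw [← integral_sqrt_one_sub_sq, intervalIntegral.integral_of_le (by norm_num)]
    refine (setIntegral_eq_integral_of_forall_compl_eq_zero fun y hy ↦ ?_).symm
    refine sqrt_eq_zero_of_nonpos (not_lt.1 fun h ↦ hy ?_)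
    constructor <;> nlinarith only [h]
  have hscale (y : ℝ) : √(c - (√c * y) ^ 2) = √c * √(1 - y ^ 2) := by
    rw [← sqrt_mul hc.le, mul_pow, sq_sqrt hc.le]
    ring_nf
  have hsubst := Measure.integral_comp_mul_left (fun y : ℝ ↦ √(c - y ^ 2)) √c
  simp only [hscale, integral_const_mul, hunit, abs_inv, abs_of_nonneg (sqrt_nonneg c),
    smul_eq_mul] at hsubst
  rw [eq_inv_mul_iff_mul_eq₀ (sqrt_pos.2 hc).ne', ← mul_assoc, mul_self_sqrt hc.le] at hsubst
  rw [← hsubst, max_eq_left hc.le, mul_comm]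

lemma integral_max_sq_sub_sq_mul {u : ℝ} (hu : 0 ≤ u) (f : ℝ → ℝ) :
    ∫ x, max (u ^ 2 - x ^ 2) 0 * f x = ∫ x in -u..u, (u ^ 2 - x ^ 2) * f x := by
  rw [intervalIntegral.integral_of_le (by linarith),
    ← setIntegral_eq_integral_of_forall_compl_eq_zero (s := Set.Ioc (-u) u)]
  · refine setIntegral_congr_fun measurableSet_Ioc fun x hx ↦ ?_
    simp only [max_eq_left (sub_nonneg.2 (sq_le_sq' hx.1.le hx.2))]
  · intro x hx
    rw [max_eq_right, zero_mul]
    refine sub_nonpos.2 (not_lt.1 fun h ↦ hx ?_)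
    exact Set.Ioo_subset_Ioc_self (abs_lt.1 (abs_lt_of_sq_lt_sq h hu))

lemma integral_sq_sub_sq (u : ℝ) : ∫ x in -u..u, (u ^ 2 - x ^ 2) = 4 / 3 * u ^ 3 := by
  rw [intervalIntegral.integral_sub (by simp) (by simp), integral_pow,
    intervalIntegral.integral_const, smul_eq_mul]
  push_cast
  ring

lemma hasDerivAt_sin_const_mul (k x : ℝ) :
    HasDerivAt (fun x ↦ sin (k * x)) (cos (k * x) * k) x := by
  simpa only [id, mul_one] using ((hasDerivAt_id x).const_mul k).sin

lemma hasDerivAt_cos_const_mul (k x : ℝ) :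
    HasDerivAt (fun x ↦ cos (k * x)) (-sin (k * x) * k) x := by
  simpa only [id, mul_one] using ((hasDerivAt_id x).const_mul k).cos

lemma integral_sq_sub_sq_mul_cos (u : ℝ) {k : ℝ} (hk : k ≠ 0) :
    ∫ x in -u..u, (u ^ 2 - x ^ 2) * cos (k * x) =
      4 * sin (k * u) / k ^ 3 - 4 * u * cos (k * u) / k ^ 2 := by
  have hderiv (x : ℝ) (_ : x ∈ Set.uIcc (-u) u) : HasDerivAt (fun x ↦
      (u ^ 2 - x ^ 2) * sin (k * x) / k - 2 * x * cos (k * x) / k ^ 2 + 2 * sin (k * x) / k ^ 3)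
      ((u ^ 2 - x ^ 2) * cos (k * x)) x := by
    have hsin := hasDerivAt_sin_const_mul k x
    have hcos := hasDerivAt_cos_const_mul k x
    refine ((((((hasDerivAt_pow 2 x).const_sub (u ^ 2)).mul hsin).div_const k).sub
      ((((hasDerivAt_id x).const_mul 2).mul hcos).div_const (k ^ 2))).add
      ((hsin.const_mul 2).div_const (k ^ 3))).congr_deriv ?_
    simp only [id]
    field_simp
    ring
  rw [intervalIntegral.integral_eq_sub_of_hasDerivAt hderiv
    (Continuous.intervalIntegrable (by fun_prop) _ _)]
  simp only [mul_neg, sin_neg, cos_neg]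
  ring

/-- The cosine transform of the hemisphere `p ↦ √(u² - ‖p‖²)` over the plane, at any frequency of
norm `ρ`. -/
noncomputable def hemisphereTransform (u ρ : ℝ) : ℝ :=
  if ρ = 0 then 2 * π / 3 * u ^ 3 else
    sin (2 * π * ρ * u) / (4 * π ^ 2 * ρ ^ 3) - u * cos (2 * π * ρ * u) / (2 * π * ρ ^ 2)

lemma integral_max_sq_sub_sq_mul_cos {u : ℝ} (hu : 0 ≤ u) (ρ : ℝ) :
    ∫ x, π / 2 * max (u ^ 2 - x ^ 2) 0 * cos (2 * π * ρ * x) = hemisphereTransform u ρ := by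
  simp only [mul_assoc (π / 2), integral_const_mul, integral_max_sq_sub_sq_mul hu]
  rw [hemisphereTransform]
  split_ifs with hρ
  · simp only [hρ, mul_zero, zero_mul, cos_zero, mul_one, integral_sq_sub_sq]
    ring
  · rw [integral_sq_sub_sq_mul_cos u (by positivity)]
    field_simp
    ring

lemma integrable_hemisphere (u : ℝ) : Integrable fun p : ℂ ↦ √(u ^ 2 - ‖p‖ ^ 2) := by
  refine Continuous.integrable_of_hasCompactSupport (by fun_prop) <|
    .intro (isCompact_closedBall 0 |u|) fun p hp ↦ sqrt_eq_zero_of_nonpos ?_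
  rw [mem_closedBall_zero_iff, not_le] at hp
  rw [sub_nonpos, ← sq_abs u]
  gcongr

lemma cosTransform_norm_eq (f : ℝ → ℝ) (ξ : ℂ) :
    cosTransform (fun p : ℂ ↦ f ‖p‖) ξ = cosTransform (fun p : ℂ ↦ f ‖p‖) (‖ξ‖ : ℂ) := by
  have hrot : rotation (Circle.exp ξ.arg) (‖ξ‖ : ℂ) = ξ := by
    rw [rotation_apply, Circle.coe_exp, mul_comm, Complex.norm_mul_exp_arg_mul_I]
  conv_lhs => rw [← hrot, ← cosTransform_comp_linearIsometryEquiv]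
  simp only [Function.comp_def, LinearIsometryEquiv.norm_map]

lemma cosTransform_hemisphere {u : ℝ} (hu : 0 ≤ u) (ξ : ℂ) :
    cosTransform (fun p : ℂ ↦ √(u ^ 2 - ‖p‖ ^ 2)) ξ = hemisphereTransform u ‖ξ‖ := by
  have hint := (Complex.volume_preserving_equiv_real_prod.symm.integrable_comp_emb
    (MeasurableEquiv.measurableEmbedding _)).2
    (integrable_mul_cos_inner (integrable_hemisphere u) (‖ξ‖ : ℂ))
  rw [cosTransform_norm_eq fun r ↦ √(u ^ 2 - r ^ 2), cosTransform,
    ← Complex.volume_preserving_equiv_real_prod.symm.integral_comp']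
  rw [Measure.volume_eq_prod] at hint ⊢
  rw [← integral_max_sq_sub_sq_mul_cos hu]
  refine (integral_prod _ hint).trans (integral_congr_ae (ae_of_all _ fun x ↦ ?_))
  simp only [← integral_sqrt_sub_sq, ← integral_mul_const]
  refine integral_congr_ae (ae_of_all _ fun y ↦ ?_)
  simp only [Complex.sq_norm, Complex.normSq_apply, Complex.inner, Complex.conj_ofReal,
    Complex.mul_re, Complex.ofReal_re, Complex.ofReal_im, mul_zero, sub_zero, Function.comp_apply,
    Complex.measurableEquivRealProd_symm_apply]
  ring_nf

end Hemisphere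

section AveragedHemispheres

variable {w : ℝ → ℝ} {a b : ℝ}

lemma continuous_integral_hemisphere (ha : 0 ≤ a) (hab : a ≤ b)
    (hw : IntervalIntegrable w volume a b) :
    Continuous fun p : ℂ ↦ ∫ u in a..b, w u * √(u ^ 2 - ‖p‖ ^ 2) := by
  refine intervalIntegral.continuous_of_dominated_interval (bound := fun u ↦ ‖w u‖ * b)
    (fun p ↦ ?_) (fun p ↦ ae_of_all _ fun u hu ↦ ?_) (hw.norm.mul_const b)
    (ae_of_all _ fun u _ ↦ by fun_prop)
  · exact hw.def'.aestronglyMeasurable.mul (by fun_prop)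
  · rw [Set.uIoc_of_le hab] at hu
    rw [norm_mul, norm_of_nonneg (sqrt_nonneg _)]
    gcongr
    calc √(u ^ 2 - ‖p‖ ^ 2) ≤ √(u ^ 2) := sqrt_le_sqrt (sub_le_self _ (sq_nonneg _))
      _ = u := sqrt_sq (ha.trans hu.1.le)
      _ ≤ b := hu.2

lemma integrable_integral_hemisphere (ha : 0 ≤ a) (hab : a ≤ b)
    (hw : IntervalIntegrable w volume a b) :
    Integrable fun p : ℂ ↦ ∫ u in a..b, w u * √(u ^ 2 - ‖p‖ ^ 2) := by
  refine (continuous_integral_hemisphere ha hab hw).integrable_of_hasCompactSupport <|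
    .intro (isCompact_closedBall 0 b) fun p hp ↦ ?_
  rw [mem_closedBall_zero_iff, not_le] at hp
  refine (intervalIntegral.integral_congr fun u hu ↦ ?_).trans intervalIntegral.integral_zero
  rw [Set.uIcc_of_le hab] at hu
  have hu0 := ha.trans hu.1
  have hup := hu.2.trans hp.le
  exact mul_eq_zero_of_right _ (sqrt_eq_zero_of_nonpos (sub_nonpos.2 (by gcongr)))

lemma cosTransform_integral_hemisphere (ha : 0 ≤ a) (hab : a ≤ b)
    (hw : IntervalIntegrable w volume a b) (ξ : ℂ) :
    cosTransform (fun p : ℂ ↦ ∫ u in a..b, w u * √(u ^ 2 - ‖p‖ ^ 2)) ξ =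
      ∫ u in a..b, w u * hemisphereTransform u ‖ξ‖ := by
  have hprod : Integrable (Function.uncurry fun (p : ℂ) u ↦ w u * √(u ^ 2 - ‖p‖ ^ 2))
      (volume.prod (volume.restrict (Set.Ioc a b))) := by
    refine ((integrable_hemisphere b).mul_prod hw.1).mono
      (hw.1.aestronglyMeasurable.comp_snd.mul (by fun_prop)) ?_
    have hmem : ∀ᵐ z : ℂ × ℝ ∂volume.prod (volume.restrict (Set.Ioc a b)), z.2 ∈ Set.Ioc a b :=
      Measure.quasiMeasurePreserving_snd.ae (ae_restrict_mem measurableSet_Ioc)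
    filter_upwards [hmem] with z hz
    have hz0 := ha.trans hz.1.le
    simp only [Function.uncurry, norm_mul, mul_comm ‖w z.2‖, norm_of_nonneg (sqrt_nonneg _)]
    gcongr
    exact hz.2
  simp only [intervalIntegral.integral_of_le hab]
  rw [cosTransform_integral hprod]
  refine setIntegral_congr_fun measurableSet_Ioc fun u hu ↦ ?_
  simp only [← cosTransform_hemisphere (ha.trans hu.1.le) ξ, cosTransform, mul_assoc,
    integral_const_mul]

lemma integral_mul_sum_hemisphere_le (ha : 0 ≤ a) (hab : a ≤ b)
    (hw : IntervalIntegrable w volume a b) (hw0 : ∀ u ∈ Set.Icc a b, 0 ≤ w u)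
    (hs : Summable fun n ↦ ∫ u in a..b, w u * hemisphereTransform u ‖latticePoint n‖)
    (B : Finset (ℤ × ℤ)) :
    ∫ u in a..b, w u * ∑ v ∈ B, √(u ^ 2 - ‖latticePoint v‖ ^ 2) ≤
      ∑' n, ∫ u in a..b, w u * hemisphereTransform u ‖latticePoint n‖ := by
  simp only [← cosTransform_integral_hemisphere ha hab hw] at hs ⊢
  have hcont (v : ℤ × ℤ) : Continuous fun u ↦ √(u ^ 2 - ‖latticePoint v‖ ^ 2) := by fun_prop
  simp only [Finset.mul_sum]
  rw [intervalIntegral.integral_finsetSum fun v _ ↦ hw.mul_continuousOn (hcont v).continuousOn]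
  refine sum_latticePoint_le_tsum_cosTransform (integrable_integral_hemisphere ha hab hw)
    (continuous_integral_hemisphere ha hab hw) (fun p ↦ ?_) hs B
  exact intervalIntegral.integral_nonneg hab fun u hu ↦ mul_nonneg (hw0 u hu) (sqrt_nonneg _)

end AveragedHemispheres

section Tent

lemma integral_tent_mul (u₀ : ℝ) {δ : ℝ} (hδ : 0 ≤ δ) {f : ℝ → ℝ} (hf : Continuous f) :
    ∫ u in (u₀ - δ)..(u₀ + δ), (δ - |u - u₀|) * f u =
      ∫ t in 0..δ, (δ - t) * (f (u₀ + t) + f (u₀ - t)) := by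
  have hright : ∫ u in u₀..(u₀ + δ), (δ - |u - u₀|) * f u =
      ∫ t in 0..δ, (δ - t) * f (u₀ + t) := by
    have hshift := intervalIntegral.integral_comp_add_left
      (a := 0) (b := δ) (fun u ↦ (δ - |u - u₀|) * f u) u₀
    rw [add_zero] at hshift
    rw [← hshift]
    refine intervalIntegral.integral_congr fun t ht ↦ ?_
    rw [Set.uIcc_of_le hδ] at ht
    simp only [add_sub_cancel_left, abs_of_nonneg ht.1]
  have hleft : ∫ u in (u₀ - δ)..u₀, (δ - |u - u₀|) * f u =
      ∫ t in 0..δ, (δ - t) * f (u₀ - t) := by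
    have hreflect := intervalIntegral.integral_comp_sub_left
      (a := 0) (b := δ) (fun u ↦ (δ - |u - u₀|) * f u) u₀
    rw [sub_zero] at hreflect
    rw [← hreflect]
    refine intervalIntegral.integral_congr fun t ht ↦ ?_
    rw [Set.uIcc_of_le hδ] at ht
    simp only [sub_sub_cancel_left, abs_neg, abs_of_nonneg ht.1]
  have hint (x y : ℝ) : IntervalIntegrable (fun u ↦ (δ - |u - u₀|) * f u) volume x y :=
    Continuous.intervalIntegrable (by fun_prop) x y
  rw [← intervalIntegral.integral_add_adjacent_intervals (hint _ u₀) (hint u₀ _), hleft, hright,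
    ← intervalIntegral.integral_add (Continuous.intervalIntegrable (by fun_prop) _ _)
      (Continuous.intervalIntegrable (by fun_prop) _ _)]
  exact intervalIntegral.integral_congr fun t _ ↦ by ring

lemma integral_tent (u₀ : ℝ) {δ : ℝ} (hδ : 0 ≤ δ) :
    ∫ u in (u₀ - δ)..(u₀ + δ), (δ - |u - u₀|) = δ ^ 2 := by
  have htent := integral_tent_mul u₀ hδ (f := fun _ ↦ 1) continuous_const
  simp only [mul_one, intervalIntegral.integral_mul_const] at htent
  rw [htent, intervalIntegral.integral_sub (by simp) (by simp), intervalIntegral.integral_const,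
    integral_id, smul_eq_mul]
  ring

lemma integral_sub_mul_cos (δ : ℝ) {k : ℝ} (hk : k ≠ 0) :
    ∫ t in 0..δ, (δ - t) * cos (k * t) = (1 - cos (k * δ)) / k ^ 2 := by
  have hderiv (t : ℝ) (_ : t ∈ Set.uIcc 0 δ) : HasDerivAt
      (fun t ↦ (δ - t) * sin (k * t) / k - cos (k * t) / k ^ 2) ((δ - t) * cos (k * t)) t := by
    refine (((((hasDerivAt_id t).const_sub δ).mul (hasDerivAt_sin_const_mul k t)).div_const k).sub
      ((hasDerivAt_cos_const_mul k t).div_const (k ^ 2))).congr_deriv ?_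
    simp only [id]
    field_simp
    ring
  rw [intervalIntegral.integral_eq_sub_of_hasDerivAt hderiv
    (Continuous.intervalIntegrable (by fun_prop) _ _)]
  simp only [sub_self, mul_zero, sin_zero, cos_zero]
  ring

lemma integral_tent_mul_cos (u₀ : ℝ) {δ : ℝ} (hδ : 0 ≤ δ) {k : ℝ} (hk : k ≠ 0) :
    ∫ u in (u₀ - δ)..(u₀ + δ), (δ - |u - u₀|) * cos (k * u) =
      2 * cos (k * u₀) * ((1 - cos (k * δ)) / k ^ 2) := by
  rw [integral_tent_mul u₀ hδ (f := fun u ↦ cos (k * u)) (by fun_prop),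
    ← integral_sub_mul_cos δ hk, ← intervalIntegral.integral_const_mul]
  refine intervalIntegral.integral_congr fun t _ ↦ ?_
  simp only [mul_add, mul_sub, cos_add, cos_sub]
  ring

lemma exists_lt_of_integral_tent_mul_lt {u₀ δ C : ℝ} (hδ : 0 ≤ δ) {f : ℝ → ℝ}
    (hf : ContinuousOn f (Set.Icc (u₀ - δ) (u₀ + δ)))
    (hC : ∫ u in (u₀ - δ)..(u₀ + δ), (δ - |u - u₀|) * f u < C * δ ^ 2) :
    ∃ u ∈ Set.Icc (u₀ - δ) (u₀ + δ), f u < C := by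
  by_contra! hle
  have hab : u₀ - δ ≤ u₀ + δ := by linarith
  have htent : Continuous fun u : ℝ ↦ δ - |u - u₀| := by fun_prop
  refine hC.not_ge ?_
  rw [← integral_tent u₀ hδ, mul_comm C, ← intervalIntegral.integral_mul_const]
  refine intervalIntegral.integral_mono_on hab ((htent.mul_const C).intervalIntegrable _ _)
    ((htent.continuousOn.mul hf).intervalIntegrable_of_Icc hab) fun u hu ↦ ?_
  have hu_tent : |u - u₀| ≤ δ := abs_sub_comm u u₀ ▸ Set.mem_Icc_iff_abs_le.2 hu
  exact mul_le_mul_of_nonneg_left (hle u hu) (sub_nonneg.2 hu_tent)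

/-- The average of `u ↦ hemisphereTransform u ρ / u` against the tent of half-width `δ` centred at
`u₀`, not normalised: the tent has mass `δ ^ 2`. -/
noncomputable def averagedTransform (u₀ δ ρ : ℝ) : ℝ :=
  ∫ u in (u₀ - δ)..(u₀ + δ), (δ - |u - u₀|) / u * hemisphereTransform u ρ

/-- Minus the amplitude of the leading term, a multiple of `cos (2πρu₀)`, of
`averagedTransform u₀ δ ρ`; division by zero makes it vanish at `ρ = 0`. -/
noncomputable def tentCoefficient (δ ρ : ℝ) : ℝ :=
  (1 - cos (2 * π * ρ * δ)) / (4 * π ^ 3 * ρ ^ 4)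

@[simp]
lemma tentCoefficient_zero (δ : ℝ) : tentCoefficient δ 0 = 0 := by
  simp [tentCoefficient]

lemma tentCoefficient_nonneg (δ ρ : ℝ) : 0 ≤ tentCoefficient δ ρ :=
  div_nonneg (sub_nonneg.2 (cos_le_one _)) (by positivity)

lemma tentCoefficient_le (δ : ℝ) {ρ : ℝ} (hρ : 1 ≤ ρ) : tentCoefficient δ ρ ≤ (ρ ^ 3)⁻¹ := by
  have hnum : 1 - cos (2 * π * ρ * δ) ≤ 2 := by linarith [neg_one_le_cos (2 * π * ρ * δ)]
  have hπ : 1 ≤ π ^ 3 := one_le_pow₀ (by linarith [pi_gt_three])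
  calc tentCoefficient δ ρ ≤ 2 / (2 * 1 * (ρ ^ 3 * 1)) := by
        rw [tentCoefficient, pow_succ ρ 3]
        gcongr
        norm_num
    _ = (ρ ^ 3)⁻¹ := by field_simp

lemma le_tentCoefficient {δ ρ : ℝ} (hρδ : |ρ * δ| ≤ 1 / 2) :
    2 / π ^ 3 * δ ^ 2 * (ρ ^ 2)⁻¹ ≤ tentCoefficient δ ρ := by
  rcases eq_or_ne ρ 0 with rfl | hρ
  · simp
  have hcos : cos (2 * π * ρ * δ) ≤ 1 - 2 / π ^ 2 * (2 * π * ρ * δ) ^ 2 := by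
    refine cos_le_one_sub_mul_cos_sq ?_
    rw [mul_assoc, abs_mul, abs_of_pos two_pi_pos]
    nlinarith only [hρδ, pi_pos]
  calc 2 / π ^ 3 * δ ^ 2 * (ρ ^ 2)⁻¹
      = (2 / π ^ 2 * (2 * π * ρ * δ) ^ 2) / (4 * π ^ 3 * ρ ^ 4) := by
        field_simp
        ring
    _ ≤ tentCoefficient δ ρ := by
        rw [tentCoefficient]
        gcongr
        linarith

lemma abs_integral_tent_mul_sin_le {u₀ δ ρ : ℝ} (hδ : 0 ≤ δ) (hu₀ : 1 ≤ u₀ - δ) (hρ : 0 < ρ)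
    (k : ℝ) :
    |∫ u in (u₀ - δ)..(u₀ + δ), (δ - |u - u₀|) / u * (sin (k * u) / (4 * π ^ 2 * ρ ^ 3))| ≤
      δ ^ 2 * (ρ ^ 3)⁻¹ := by
  have hab : u₀ - δ ≤ u₀ + δ := by linarith
  rw [← integral_tent u₀ hδ, ← intervalIntegral.integral_mul_const, ← norm_eq_abs]
  refine intervalIntegral.norm_integral_le_of_norm_le hab (ae_of_all _ fun u hu ↦ ?_)
    (Continuous.intervalIntegrable (by fun_prop) _ _)
  have htent : 0 ≤ δ - |u - u₀| := sub_nonneg.2 <|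
    abs_sub_comm u u₀ ▸ Set.mem_Icc_iff_abs_le.2 (Set.Ioc_subset_Icc_self hu)
  have hu1 : 1 ≤ u := hu₀.trans hu.1.le
  have hπ : 1 ≤ 4 * π ^ 2 := by nlinarith only [pi_gt_three]
  rw [norm_mul, norm_div, norm_div, norm_of_nonneg htent,
    norm_of_nonneg (zero_le_one.trans hu1), norm_of_nonneg (by positivity : 0 ≤ 4 * π ^ 2 * ρ ^ 3),
    inv_eq_one_div]
  have hsin : ‖sin (k * u)‖ ≤ 1 := abs_sin_le_one _
  gcongr
  · exact div_le_self htent hu1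
  · exact le_mul_of_one_le_left (by positivity) hπ

lemma abs_averagedTransform_add_le {u₀ δ ρ : ℝ} (hδ : 0 ≤ δ) (hu₀ : 1 ≤ u₀ - δ) (hρ : 0 < ρ) :
    |averagedTransform u₀ δ ρ + tentCoefficient δ ρ * cos (2 * π * ρ * u₀)| ≤
      δ ^ 2 * (ρ ^ 3)⁻¹ := by
  have hab : u₀ - δ ≤ u₀ + δ := by linarith
  have hsplit : averagedTransform u₀ δ ρ =
      (∫ u in (u₀ - δ)..(u₀ + δ),
        (δ - |u - u₀|) / u * (sin (2 * π * ρ * u) / (4 * π ^ 2 * ρ ^ 3))) -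
      ∫ u in (u₀ - δ)..(u₀ + δ), (2 * π * ρ ^ 2)⁻¹ * ((δ - |u - u₀|) * cos (2 * π * ρ * u)) := by
    rw [averagedTransform, ← intervalIntegral.integral_sub]
    · refine intervalIntegral.integral_congr fun u hu ↦ ?_
      rw [Set.uIcc_of_le hab] at hu
      have hu0 : u ≠ 0 := by linarith [hu.1]
      simp only [hemisphereTransform, if_neg hρ.ne']
      field_simp
    · refine ContinuousOn.intervalIntegrable_of_Icc hab ?_
      have (u : ℝ) (hu : u ∈ Set.Icc (u₀ - δ) (u₀ + δ)) : u ≠ 0 := by linarith [hu.1]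
      fun_prop (disch := assumption)
    · exact Continuous.intervalIntegrable (by fun_prop) _ _
  have hcos : ∫ u in (u₀ - δ)..(u₀ + δ), (2 * π * ρ ^ 2)⁻¹ *
      ((δ - |u - u₀|) * cos (2 * π * ρ * u)) = tentCoefficient δ ρ * cos (2 * π * ρ * u₀) := by
    rw [intervalIntegral.integral_const_mul, integral_tent_mul_cos u₀ hδ (by positivity),
      tentCoefficient]
    field_simp
    ring
  rw [hsplit, hcos, sub_add_cancel]
  exact abs_integral_tent_mul_sin_le hδ hu₀ hρ _

end Tent

section AlmostPeriodic

/-- The powers of a point of the compact torus `ι → Circle` return arbitrarily close to `1`, and the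
series is a continuous function on this torus. -/
lemma exists_lt_tsum_mul_cos {ι : Type*} {g : ι → ℝ} (hg : Summable g) (k : ι → ℝ) {c : ℝ}
    (hc : c < ∑' i, g i) (X : ℝ) : ∃ u, X < u ∧ c < ∑' i, g i * cos (k i * u) := by
  let f (z : ι → Circle) : ℝ := ∑' i, g i * (z i : ℂ).re
  have hf : Continuous f := by
    refine continuous_tsum (fun i ↦ by fun_prop) hg.norm fun i z ↦ ?_
    rw [norm_mul]
    refine mul_le_of_le_one_right (norm_nonneg _) ?_
    exact (Complex.abs_re_le_norm _).trans_eq (Circle.norm_coe _)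
  have hnhds : ∀ᶠ z in 𝓝 1, c < f z := hf.continuousAt.eventually_const_lt (by simpa [f] using hc)
  have hfreq : ∃ᶠ n : ℕ in atTop, c < f ((fun i ↦ Circle.exp (k i)) ^ n) :=
    (mapClusterPt_one_atTop_pow fun i ↦ Circle.exp (k i)).frequently hnhds
  obtain ⟨N, hN⟩ := exists_nat_gt X
  obtain ⟨n, hNn, hn⟩ := frequently_atTop.1 hfreq N
  refine ⟨n, hN.trans_le (mod_cast hNn), hn.trans_eq (tsum_congr fun i ↦ ?_)⟩
  rw [Pi.pow_apply, ← Circle.exp_nsmul, Circle.coe_exp, Complex.exp_ofReal_mul_I_re, nsmul_eq_mul,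
    mul_comm (k i)]

end AlmostPeriodic

section LatticeSums

lemma norm_finTwoArrowEquiv_symm_le (n : ℤ × ℤ) :
    ‖(finTwoArrowEquiv ℤ).symm n‖ ≤ ‖latticePoint n‖ := by
  refine (pi_norm_le_iff_of_nonneg (norm_nonneg _)).2 (Fin.forall_fin_two.2 ⟨?_, ?_⟩)
  · simpa [latticePoint, Int.norm_eq_abs] using Complex.abs_re_le_norm (latticePoint n)
  · simpa [latticePoint, Int.norm_eq_abs] using Complex.abs_im_le_norm (latticePoint n)

lemma summable_norm_latticePoint_rpow_neg {r : ℝ} (hr : 2 < r) :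
    Summable fun n ↦ ‖latticePoint n‖ ^ (-r) := by
  refine ((finTwoArrowEquiv ℤ).symm.summable_iff.2
    (EisensteinSeries.summable_one_div_norm_rpow hr)).of_nonneg_of_le
    (fun n ↦ by positivity) fun n ↦ ?_
  rcases eq_or_ne n 0 with rfl | hn
  · rw [latticePoint_zero, norm_zero, zero_rpow (by linarith)]
    exact rpow_nonneg (norm_nonneg _) _
  have hzero : (finTwoArrowEquiv ℤ).symm 0 = 0 := funext (Fin.forall_fin_two.2 ⟨rfl, rfl⟩)
  have hpos : 0 < ‖(finTwoArrowEquiv ℤ).symm n‖ :=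
    norm_pos_iff.2 fun h ↦ hn ((finTwoArrowEquiv ℤ).symm.injective (h.trans hzero.symm))
  exact rpow_le_rpow_of_nonpos hpos (norm_finTwoArrowEquiv_symm_le n) (by linarith)

lemma summable_inv_norm_latticePoint_cube : Summable fun n ↦ (‖latticePoint n‖ ^ 3)⁻¹ := by
  refine (summable_norm_latticePoint_rpow_neg (r := 3) (by norm_num)).congr fun n ↦ ?_
  rw [rpow_neg (norm_nonneg _), rpow_ofNat]

lemma inv_le_sum_inv_norm_latticePoint_sq (a : ℕ) :
    ((a + 1 : ℕ) : ℝ)⁻¹ ≤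
      2 * ∑ b ∈ Finset.range (a + 1), (‖latticePoint ((a + 1 : ℕ), b)‖ ^ 2)⁻¹ := by
  have hterm (b : ℕ) (hb : b ∈ Finset.range (a + 1)) :
      (2 * ((a + 1 : ℕ) : ℝ) ^ 2)⁻¹ ≤ (‖latticePoint ((a + 1 : ℕ), b)‖ ^ 2)⁻¹ := by
    have hba : (b : ℝ) ≤ (a + 1 : ℕ) := mod_cast (Finset.mem_range.1 hb).le
    rw [norm_latticePoint_sq, two_mul]
    simp only [Int.cast_natCast]
    gcongr
  calc ((a + 1 : ℕ) : ℝ)⁻¹ = 2 * ∑ _b ∈ Finset.range (a + 1), (2 * ((a + 1 : ℕ) : ℝ) ^ 2)⁻¹ := by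
        rw [Finset.sum_const, Finset.card_range, nsmul_eq_mul]
        field_simp
    _ ≤ _ := mul_le_mul_of_nonneg_left (Finset.sum_le_sum hterm) zero_le_two

lemma not_summable_inv_norm_latticePoint_sq :
    ¬ Summable fun n ↦ (‖latticePoint n‖ ^ 2)⁻¹ := by
  intro hs
  have hinj : Function.Injective fun x : ℕ × ℕ ↦ (((x.1 + 1 : ℕ) : ℤ), (x.2 : ℤ)) := by
    rintro ⟨a, b⟩ ⟨c, d⟩ h
    simpa using h
  have hquadrant := hs.comp_injective hinj
  have hharmonic : Summable fun a : ℕ ↦ ((a + 1 : ℕ) : ℝ)⁻¹ := by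
    refine (hquadrant.prod.mul_left 2).of_nonneg_of_le (fun a ↦ by positivity) fun a ↦ ?_
    refine (inv_le_sum_inv_norm_latticePoint_sq a).trans ?_
    gcongr
    exact (hquadrant.prod_factor a).sum_le_tsum _ fun b _ ↦ inv_nonneg.2 (sq_nonneg _)
  exact Real.not_summable_natCast_inv ((summable_nat_add_iff 1).1 hharmonic)

lemma tentCoefficient_norm_latticePoint_le (δ : ℝ) (n : ℤ × ℤ) :
    tentCoefficient δ ‖latticePoint n‖ ≤ (‖latticePoint n‖ ^ 3)⁻¹ := by
  rcases eq_or_ne n 0 with rfl | hn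
  · simp
  · exact tentCoefficient_le δ (one_le_norm_latticePoint hn)

lemma summable_tentCoefficient (δ : ℝ) : Summable fun n ↦ tentCoefficient δ ‖latticePoint n‖ :=
  summable_inv_norm_latticePoint_cube.of_nonneg_of_le (fun _ ↦ tentCoefficient_nonneg _ _)
    (tentCoefficient_norm_latticePoint_le δ)

lemma exists_mul_sq_lt_tsum_tentCoefficient (M : ℝ) :
    ∃ δ > 0, M * δ ^ 2 < ∑' n, tentCoefficient δ ‖latticePoint n‖ := by
  obtain ⟨s, hs⟩ : ∃ s : Finset (ℤ × ℤ), π ^ 3 / 2 * M < ∑ n ∈ s, (‖latticePoint n‖ ^ 2)⁻¹ := by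
    by_contra! hbdd
    exact not_summable_inv_norm_latticePoint_sq
      (summable_of_sum_le (fun n ↦ inv_nonneg.2 (sq_nonneg _)) hbdd)
  have hsmall : ∀ᶠ δ in 𝓝[>] (0 : ℝ), ∀ n ∈ s, |‖latticePoint n‖ * δ| ≤ 1 / 2 := by
    refine (Filter.eventually_all_finset s).2 fun n _ ↦ ?_
    have hlim : Tendsto (fun δ ↦ |‖latticePoint n‖ * δ|) (𝓝 0) (𝓝 |‖latticePoint n‖ * 0|) :=
      Continuous.tendsto (by fun_prop) 0
    rw [mul_zero, abs_zero] at hlim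
    exact (hlim.mono_left nhdsWithin_le_nhds).eventually_le_const (by norm_num)
  obtain ⟨δ, hδs, hδ⟩ := (hsmall.and self_mem_nhdsWithin).exists
  refine ⟨δ, hδ, ?_⟩
  calc M * δ ^ 2 = 2 / π ^ 3 * δ ^ 2 * (π ^ 3 / 2 * M) := by field_simp
    _ < 2 / π ^ 3 * δ ^ 2 * ∑ n ∈ s, (‖latticePoint n‖ ^ 2)⁻¹ := by gcongr
    _ ≤ ∑ n ∈ s, tentCoefficient δ ‖latticePoint n‖ := by
        rw [Finset.mul_sum]
        exact Finset.sum_le_sum fun n hn ↦ le_tentCoefficient (hδs n hn)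
    _ ≤ ∑' n, tentCoefficient δ ‖latticePoint n‖ :=
        (summable_tentCoefficient δ).sum_le_tsum s fun _ _ ↦ tentCoefficient_nonneg _ _

end LatticeSums

section TentAverage

variable {u₀ δ : ℝ}

lemma summable_tentCoefficient_mul_cos (δ u₀ : ℝ) : Summable fun n ↦
    tentCoefficient δ ‖latticePoint n‖ * cos (2 * π * ‖latticePoint n‖ * u₀) := by
  refine (summable_tentCoefficient δ).of_norm_bounded fun n ↦ ?_
  rw [norm_mul, norm_of_nonneg (tentCoefficient_nonneg _ _)]
  exact mul_le_of_le_one_right (tentCoefficient_nonneg _ _) (abs_cos_le_one _)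

lemma abs_averagedTransform_norm_latticePoint_sub_le (hδ : 0 ≤ δ) (hu₀ : 1 ≤ u₀ - δ) (n : ℤ × ℤ) :
    |averagedTransform u₀ δ ‖latticePoint n‖ - ((if n = 0 then averagedTransform u₀ δ 0 else 0) -
      tentCoefficient δ ‖latticePoint n‖ * cos (2 * π * ‖latticePoint n‖ * u₀))| ≤
      δ ^ 2 * (‖latticePoint n‖ ^ 3)⁻¹ := by
  rcases eq_or_ne n 0 with rfl | hn
  · simp
  · rw [if_neg hn, zero_sub, sub_neg_eq_add]
    exact abs_averagedTransform_add_le hδ hu₀ (one_pos.trans_le (one_le_norm_latticePoint hn))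

lemma summable_averagedTransform (hδ : 0 ≤ δ) (hu₀ : 1 ≤ u₀ - δ) :
    Summable fun n ↦ averagedTransform u₀ δ ‖latticePoint n‖ := by
  have herror := (summable_inv_norm_latticePoint_cube.mul_left (δ ^ 2)).of_norm_bounded
    fun n ↦ (norm_eq_abs _).trans_le (abs_averagedTransform_norm_latticePoint_sub_le hδ hu₀ n)
  exact (herror.add ((hasSum_ite_eq 0 (averagedTransform u₀ δ 0)).summable.sub
    (summable_tentCoefficient_mul_cos δ u₀))).congr fun n ↦ sub_add_cancel _ _

lemma tsum_averagedTransform_le (hδ : 0 ≤ δ) (hu₀ : 1 ≤ u₀ - δ) :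
    ∑' n, averagedTransform u₀ δ ‖latticePoint n‖ ≤
      averagedTransform u₀ δ 0 -
        (∑' n, tentCoefficient δ ‖latticePoint n‖ * cos (2 * π * ‖latticePoint n‖ * u₀)) +
        δ ^ 2 * ∑' n, (‖latticePoint n‖ ^ 3)⁻¹ := by
  have hmain := (hasSum_ite_eq (0 : ℤ × ℤ) (averagedTransform u₀ δ 0)).sub
    (summable_tentCoefficient_mul_cos δ u₀).hasSum
  have herror := (summable_inv_norm_latticePoint_cube.mul_left (δ ^ 2)).hasSum
  rw [tsum_mul_left] at herror
  refine hasSum_le (fun n ↦ ?_) (summable_averagedTransform hδ hu₀).hasSum (hmain.add herror)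
  exact sub_le_iff_le_add'.1
    ((le_abs_self _).trans (abs_averagedTransform_norm_latticePoint_sub_le hδ hu₀ n))

lemma continuousOn_tent_div (hu₀ : 1 ≤ u₀ - δ) :
    ContinuousOn (fun u ↦ (δ - |u - u₀|) / u) (Set.Icc (u₀ - δ) (u₀ + δ)) := by
  have hne (u : ℝ) (hu : u ∈ Set.Icc (u₀ - δ) (u₀ + δ)) : u ≠ 0 := by linarith [hu.1]
  fun_prop (disch := assumption)

lemma integral_tent_mul_sum_hemisphere_sub_le (hδ : 0 ≤ δ) (hu₀ : 1 ≤ u₀ - δ)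
    (B : Finset (ℤ × ℤ)) :
    ∫ u in (u₀ - δ)..(u₀ + δ), (δ - |u - u₀|) *
        ((∑ v ∈ B, √(u ^ 2 - ‖latticePoint v‖ ^ 2) - 2 * π / 3 * u ^ 3) / u) ≤
      δ ^ 2 * (∑' n, (‖latticePoint n‖ ^ 3)⁻¹) -
        ∑' n, tentCoefficient δ ‖latticePoint n‖ * cos (2 * π * ‖latticePoint n‖ * u₀) := by
  have hab : u₀ - δ ≤ u₀ + δ := by linarith
  have hw := continuousOn_tent_div hu₀
  have hw0 (u : ℝ) (hu : u ∈ Set.Icc (u₀ - δ) (u₀ + δ)) : 0 ≤ (δ - |u - u₀|) / u :=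
    div_nonneg (sub_nonneg.2 (abs_sub_comm u u₀ ▸ Set.mem_Icc_iff_abs_le.2 hu))
      (by linarith [hu.1])
  have hpoisson := integral_mul_sum_hemisphere_le (by linarith) hab
    (hw.intervalIntegrable_of_Icc hab) hw0 (summable_averagedTransform hδ hu₀) B
  have hsplit : ∫ u in (u₀ - δ)..(u₀ + δ), (δ - |u - u₀|) *
        ((∑ v ∈ B, √(u ^ 2 - ‖latticePoint v‖ ^ 2) - 2 * π / 3 * u ^ 3) / u) =
      (∫ u in (u₀ - δ)..(u₀ + δ),
        (δ - |u - u₀|) / u * ∑ v ∈ B, √(u ^ 2 - ‖latticePoint v‖ ^ 2)) -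
        averagedTransform u₀ δ 0 := by
    simp only [averagedTransform, hemisphereTransform, if_true]
    rw [← intervalIntegral.integral_sub
      (ContinuousOn.intervalIntegrable_of_Icc hab (by fun_prop))
      (ContinuousOn.intervalIntegrable_of_Icc hab (by fun_prop))]
    exact intervalIntegral.integral_congr fun u _ ↦ by ring
  have htsum := tsum_averagedTransform_le hδ hu₀
  simp only [averagedTransform] at *
  linarith

end TentAverage

section SumsOfTwoSquares

/-- The integer points `v` of the open disc `v.1 ^ 2 + v.2 ^ 2 < N`; the filtered box is only there
to make it a finite set. -/
noncomputable def latticeDisc (N : ℕ) : Finset (ℤ × ℤ) :=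
  {v ∈ Finset.Icc (-N : ℤ) N ×ˢ Finset.Icc (-N : ℤ) N | v.1 ^ 2 + v.2 ^ 2 < N}

lemma mem_latticeDisc {N : ℕ} {v : ℤ × ℤ} : v ∈ latticeDisc N ↔ v.1 ^ 2 + v.2 ^ 2 < N := by
  refine ⟨fun h ↦ (Finset.mem_filter.1 h).2, fun h ↦ Finset.mem_filter.2 ⟨?_, h⟩⟩
  simp only [Finset.mem_product, Finset.mem_Icc, ← abs_le]
  constructor
  · nlinarith [Int.le_self_sq |v.1|, sq_abs v.1, sq_nonneg v.2]
  · nlinarith [Int.le_self_sq |v.2|, sq_abs v.2, sq_nonneg v.1]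

lemma sum_r2_mul (N : ℕ) (g : ℕ → ℝ) :
    ∑ m ∈ Finset.range N, r2 m * g m =
      ∑ v ∈ latticeDisc N, g (v.1 ^ 2 + v.2 ^ 2).toNat := by
  have hmaps (v : ℤ × ℤ) (hv : v ∈ latticeDisc N) :
      (v.1 ^ 2 + v.2 ^ 2).toNat ∈ Finset.range N := by
    have hvN := mem_latticeDisc.1 hv
    rw [Finset.mem_range, Int.toNat_lt (by positivity)]
    exact hvN
  rw [← Finset.sum_fiberwise_of_maps_to hmaps]
  refine Finset.sum_congr rfl fun m hm ↦ ?_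
  have hfiber : {p : ℤ × ℤ | p.1 ^ 2 + p.2 ^ 2 = (m : ℤ)} =
      ({v ∈ latticeDisc N | (v.1 ^ 2 + v.2 ^ 2).toNat = m} : Finset (ℤ × ℤ)) := by
    ext v
    have hv : 0 ≤ v.1 ^ 2 + v.2 ^ 2 := by positivity
    rw [Finset.mem_range] at hm
    simp only [Set.mem_ofPred_eq, Finset.coe_filter, mem_latticeDisc]
    omega
  rw [r2, hfiber, Set.ncard_coe_finset, ← nsmul_eq_mul, ← Finset.sum_const]
  exact Finset.sum_congr rfl fun v hv ↦ by rw [(Finset.mem_filter.1 hv).2]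

lemma sum_r2_mul_sqrt_sub {x : ℝ} {N : ℕ} (hN : ⌊x⌋₊ < N) :
    ∑ m ∈ Finset.range (⌊x⌋₊ + 1), r2 m * √(x - m) =
      ∑ v ∈ latticeDisc N, √(x - ‖latticePoint v‖ ^ 2) := by
  have hextend : ∑ m ∈ Finset.range (⌊x⌋₊ + 1), r2 m * √(x - m) =
      ∑ m ∈ Finset.range N, r2 m * √(x - m) := by
    refine Finset.sum_subset (Finset.range_subset_range.2 hN) fun m _ hm ↦ ?_
    have hxm : x < m := Nat.lt_of_floor_lt (by simpa using hm)
    rw [sqrt_eq_zero_of_nonpos (by linarith), mul_zero]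
  rw [hextend, sum_r2_mul N fun m ↦ √(x - m)]
  refine Finset.sum_congr rfl fun v _ ↦ ?_
  have hcast : (((v.1 ^ 2 + v.2 ^ 2).toNat : ℕ) : ℤ) = v.1 ^ 2 + v.2 ^ 2 :=
    Int.toNat_of_nonneg (by positivity)
  rw [norm_latticePoint_sq, ← Int.cast_natCast (R := ℝ) (Int.toNat _), hcast]
  push_cast
  rfl

lemma exists_sum_r2_mul_sqrt_lt (C U : ℝ) : ∃ u, U < u ∧ 0 < u ∧
    ∑ m ∈ Finset.range (⌊u ^ 2⌋₊ + 1), r2 m * √(u ^ 2 - m) < 2 * π / 3 * u ^ 3 + C * u := by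
  obtain ⟨δ, hδ, hlarge⟩ :=
    exists_mul_sq_lt_tsum_tentCoefficient (∑' n, (‖latticePoint n‖ ^ 3)⁻¹ - C)
  obtain ⟨u₀, hu₀, haligned⟩ := exists_lt_tsum_mul_cos (summable_tentCoefficient δ)
    (fun n ↦ 2 * π * ‖latticePoint n‖) hlarge (max U 0 + δ + 1)
  have hU := le_max_left U 0
  have h0 := le_max_right U 0
  have hu₀δ : 1 ≤ u₀ - δ := by linarith
  let N := ⌊(u₀ + δ) ^ 2⌋₊ + 1
  obtain ⟨u, ⟨hleft, hright⟩, hu⟩ := exists_lt_of_integral_tent_mul_lt (u₀ := u₀) (C := C)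
    (f := fun u ↦ (∑ v ∈ latticeDisc N, √(u ^ 2 - ‖latticePoint v‖ ^ 2) - 2 * π / 3 * u ^ 3) / u)
    hδ.le
    (by
      have hne (u : ℝ) (hu : u ∈ Set.Icc (u₀ - δ) (u₀ + δ)) : u ≠ 0 := by linarith [hu.1]
      fun_prop (disch := assumption))
    (by linarith [integral_tent_mul_sum_hemisphere_sub_le hδ.le hu₀δ (latticeDisc N)])
  have hu_pos : 0 < u := by linarith
  have hfloor : ⌊u ^ 2⌋₊ < N := Nat.lt_succ_of_le (Nat.floor_le_floor (by gcongr))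
  refine ⟨u, by linarith, hu_pos, ?_⟩
  rw [sum_r2_mul_sqrt_sub hfloor]
  linarith [(div_lt_iff₀ hu_pos).1 hu]

end SumsOfTwoSquares

section Normalization

lemma Sx0_pow_four {u : ℝ} (hu : 0 ≤ u) :
    Sx0 (u ^ 4) = √2 * u * ∑ m ∈ Finset.range (⌊u ^ 2⌋₊ + 1), r2 m * √(u ^ 2 - m) := by
  have hsqrt : √(u ^ 4) = u ^ 2 := by
    rw [show u ^ 4 = (u ^ 2) ^ 2 by ring, sqrt_sq (by positivity)]
  have hroot : (u ^ 4) ^ ((1 : ℝ) / 4) = u := by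
    rw [one_div]
    exact pow_rpow_inv_natCast hu four_ne_zero
  simp only [Sx0, hsqrt, hroot, ← sqrt_eq_rpow]

lemma rpow_mul_Sx0_pow_four_sub {u : ℝ} (hu : 0 < u) :
    (u ^ 4) ^ (-(1 : ℝ) / 2) * (Sx0 (u ^ 4) - 2 ^ ((3 : ℝ) / 2) * π / 3 * u ^ 4) =
      √2 * ((∑ m ∈ Finset.range (⌊u ^ 2⌋₊ + 1), r2 m * √(u ^ 2 - m) - 2 * π / 3 * u ^ 3) / u) := by
  have hweight : (u ^ 4) ^ (-(1 : ℝ) / 2) = (u ^ 2)⁻¹ := by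
    rw [neg_div, rpow_neg (by positivity), ← sqrt_eq_rpow, show u ^ 4 = (u ^ 2) ^ 2 by ring,
      sqrt_sq (by positivity)]
  have hconst : (2 : ℝ) ^ ((3 : ℝ) / 2) = 2 * √2 := by
    rw [show (3 : ℝ) / 2 = 1 + 1 / 2 by norm_num, rpow_add two_pos, rpow_one, sqrt_eq_rpow]
  rw [Sx0_pow_four hu.le, hweight, hconst]
  field_simp

end Normalization

/-- `liminf_{x→∞} x^{−1/2}·(S(√x; 0) − (2^{3/2}π/3)·x) = −∞`. -/
theorem liminf_Q_eq_bot :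
    ∀ C : ℝ, ∀ X : ℝ, ∃ x : ℝ, X < x ∧
      x ^ (-(1 : ℝ) / 2) * (Sx0 x - 2 ^ ((3 : ℝ) / 2) * Real.pi / 3 * x) < C := by
  intro C X
  obtain ⟨u, hu, hu_pos, hsum⟩ := exists_sum_r2_mul_sqrt_lt (C / √2) (max X 1)
  obtain ⟨hX, h1⟩ := max_lt_iff.1 hu
  refine ⟨u ^ 4, hX.trans_le (le_self_pow₀ h1.le four_ne_zero), ?_⟩
  rw [rpow_mul_Sx0_pow_four_sub hu_pos, mul_comm, ← lt_div_iff₀ (by positivity),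
    div_lt_iff₀ hu_pos]
  linarith
end
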